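/- arXiv:2202.10703 — 3 statements merged into one kernel-verified Lean document; each statement's English description precedes it below -/
import Mathlib

section
/- There exist α₀, α₁ > 0 such that the following holds. Let Q ∈ Sym₀ with dist(Q, 𝒩) ≤ α₀, let α ∈ (0, α₁), and suppose n : B_α(Q) → ℝ³ is a continuous map such that for every P ∈ B_α(Q), n(P) is a unit eigenvector of P associated to its largest eigenvalue (for α₀, α₁ small every such P has a simple largest eigenvalue, so such a continuous selection exists on the ball). Then lim_{s→0} H⁴( { Y ∈ B_α(0) ⊂ Sym₀ : n(Q − Y)·e₃ = s } ) = H⁴( B_α(Q) ∩ 𝒯 ), where H⁴ denotes the 4-dimensional Hausdorff measure on the 5-dimensional Euclidean space Sym₀. -/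
/- STATEMENT 10: There exist α₀, α₁ > 0 such that: for Q ∈ Sym₀ with dist(Q,𝒩) ≤ α₀ and
α ∈ (0,α₁), if n : B_α(Q) → ℝ³ is continuous and n(P) is a unit eigenvector of P for
its largest eigenvalue for every P ∈ B_α(Q), then
lim_{s→0} H⁴({Y ∈ B_α(0) ⊂ Sym₀ : n(Q−Y)·e₃ = s}) = H⁴(B_α(Q) ∩ 𝒯). -/

noncomputable section

open Matrix MeasureTheory Metric Set Filter

abbrev Mat3 : Type := Matrix (Fin 3) (Fin 3) ℝ
abbrev E9 : Type := EuclideanSpace ℝ (Fin 3 × Fin 3)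

def toM (A : E9) : Mat3 := Matrix.of fun i j => A (i, j)

def Sym0E : Set E9 := {A | (toM A).IsSymm ∧ (toM A).trace = 0}

def unitVec (n : Fin 3 → ℝ) : Prop := ∑ i, (n i) ^ 2 = 1

def uniax (s : ℝ) (n : Fin 3 → ℝ) : Mat3 :=
  s • (Matrix.vecMulVec n n - (1 / 3 : ℝ) • (1 : Mat3))

def NsetE (s : ℝ) : Set E9 := {A | ∃ n, unitVec n ∧ toM A = uniax s n}

def IsEigen (Q : Mat3) (μ : ℝ) (v : Fin 3 → ℝ) : Prop := Q.mulVec v = μ • v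

def MaxEigen (Q : Mat3) (lam : ℝ) (n : Fin 3 → ℝ) : Prop :=
  unitVec n ∧ IsEigen Q lam n ∧
    ∀ (μ : ℝ) (v : Fin 3 → ℝ), v ≠ 0 → IsEigen Q μ v → μ ≤ lam

def SimpleMaxEigen (Q : Mat3) (lam : ℝ) (n : Fin 3 → ℝ) : Prop :=
  MaxEigen Q lam n ∧ ∀ v : Fin 3 → ℝ, IsEigen Q lam v → ∃ t : ℝ, v = t • n

/-- 𝒯 = { Q ∈ Sym₀ : Q ≠ 0, simple largest eigenvalue, unit eigenvector n with n·e₃ = 0 }. -/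
def TsetE : Set E9 :=
  {A | A ∈ Sym0E ∧ A ≠ 0 ∧ ∃ (lam : ℝ) (n : Fin 3 → ℝ), SimpleMaxEigen (toM A) lam n ∧ n 2 = 0}

/-! Near `𝒩` the largest eigenvalue is separated from the others by a definite gap, so by the
Davis–Kahan estimate the continuous eigenvector field `n` is Lipschitz. If `n(P)·e₃ = s`, rotating
the frame of `P` in the plane of `n(P)` and `e₃` by the angle `-arcsin s` makes its leading
eigenvector horizontal; conversely, rotating `P ∈ 𝒯` by `arcsin s` raises its leading eigenvector
to height `s`. Both maps differ from the identity by a map of `C^{0,1}`-size `O(|s|)`, hence compare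
the level set with the parts of `𝒯` in the balls of radius `α ± O(|s|)`, up to a factor
`1 + O(|s|)` in `H⁴`. It remains that `H⁴(B_r(Q) ∩ 𝒯)` is finite and continuous in `r`, i.e. that
spheres are null for `H⁴` on `𝒯`. This follows from a smooth parametrization of `𝒯` by four
parameters that is affine in one of them: every line in that direction meets the preimage of a
sphere in at most two points. -/

open scoped ENNReal Topology

/-- Functions of `C^{0,1}`-size at most `ε` on `S`: both the sup norm and the Lipschitz constant
of `f` on `S` are at most `ε`. A map `f` is treated as a small perturbation of the identity when
`fun x => f x - x` is of small size in this sense. -/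
structure LipBoundOn {X E : Type*} [PseudoMetricSpace X] [NormedAddCommGroup E]
    (f : X → E) (S : Set X) (ε : ℝ) : Prop where
  norm_le : ∀ x ∈ S, ‖f x‖ ≤ ε
  norm_sub_le_mul_dist : ∀ x ∈ S, ∀ y ∈ S, ‖f x - f y‖ ≤ ε * dist x y

namespace LipBoundOn

section NormedGroup

variable {X E : Type*} [PseudoMetricSpace X] [NormedAddCommGroup E] {f g : X → E}
  {S : Set X} {ε δ : ℝ}

lemma mono (hf : LipBoundOn f S ε) (h : ε ≤ δ) : LipBoundOn f S δ where
  norm_le x hx := (hf.norm_le x hx).trans h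
  norm_sub_le_mul_dist x hx y hy := (hf.norm_sub_le_mul_dist x hx y hy).trans (by gcongr)

lemma mono_set {S' : Set X} (hf : LipBoundOn f S ε) (h : S' ⊆ S) : LipBoundOn f S' ε where
  norm_le x hx := hf.norm_le x (h hx)
  norm_sub_le_mul_dist x hx y hy := hf.norm_sub_le_mul_dist x (h hx) y (h hy)

lemma const (c : E) : LipBoundOn (fun _ => c) S ‖c‖ where
  norm_le _ _ := le_rfl
  norm_sub_le_mul_dist _ _ _ _ := by rw [sub_self, norm_zero]; positivity

lemma add (hf : LipBoundOn f S ε) (hg : LipBoundOn g S δ) :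
    LipBoundOn (fun x => f x + g x) S (ε + δ) where
  norm_le x hx := norm_add_le_of_le (hf.norm_le x hx) (hg.norm_le x hx)
  norm_sub_le_mul_dist x hx y hy := by
    rw [add_sub_add_comm, add_mul]
    exact norm_add_le_of_le (hf.norm_sub_le_mul_dist x hx y hy) (hg.norm_sub_le_mul_dist x hx y hy)

variable {F : Type*} [NormedAddCommGroup F] [NormedSpace ℝ E] [NormedSpace ℝ F]

lemma linearMap_comp (hf : LipBoundOn f S ε) (φ : E →ₗ[ℝ] F) {C : ℝ}
    (hC : 0 ≤ C) (hφ : ∀ x, ‖φ x‖ ≤ C * ‖x‖) : LipBoundOn (fun x => φ (f x)) S (C * ε) where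
  norm_le x hx := (hφ _).trans (mul_le_mul_of_nonneg_left (hf.norm_le x hx) hC)
  norm_sub_le_mul_dist x hx y hy := by
    rw [← map_sub, mul_assoc]
    exact (hφ _).trans (mul_le_mul_of_nonneg_left (hf.norm_sub_le_mul_dist x hx y hy) hC)

lemma isometry_comp (hf : LipBoundOn f S ε) (φ : E →ₗᵢ[ℝ] F) :
    LipBoundOn (fun x => φ (f x)) S ε := by
  simpa using hf.linearMap_comp φ.toLinearMap zero_le_one (by simp)

lemma const_smul (hf : LipBoundOn f S ε) (c : ℝ) :
    LipBoundOn (fun x => c • f x) S (|c| * ε) where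
  norm_le x hx := by
    rw [norm_smul, Real.norm_eq_abs]
    exact mul_le_mul_of_nonneg_left (hf.norm_le x hx) (abs_nonneg c)
  norm_sub_le_mul_dist x hx y hy := by
    rw [← smul_sub, norm_smul, Real.norm_eq_abs, mul_assoc]
    exact mul_le_mul_of_nonneg_left (hf.norm_sub_le_mul_dist x hx y hy) (abs_nonneg c)

end NormedGroup

lemma mul {X A : Type*} [PseudoMetricSpace X] [NormedRing A] {f g : X → A} {S : Set X} {ε δ : ℝ}
    (hf : LipBoundOn f S ε) (hg : LipBoundOn g S δ) :
    LipBoundOn (fun x => f x * g x) S (2 * ε * δ) where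
  norm_le x hx := by
    have hε : 0 ≤ ε := (norm_nonneg _).trans (hf.norm_le x hx)
    have hδ : 0 ≤ δ := (norm_nonneg _).trans (hg.norm_le x hx)
    calc ‖f x * g x‖ ≤ ε * δ := norm_mul_le_of_le (hf.norm_le x hx) (hg.norm_le x hx)
      _ ≤ 2 * ε * δ := by nlinarith [mul_nonneg hε hδ]
  norm_sub_le_mul_dist x hx y hy :=
    calc ‖f x * g x - f y * g y‖ = ‖(f x - f y) * g x + f y * (g x - g y)‖ := by
          congr 1; noncomm_ring
      _ ≤ ε * dist x y * δ + ε * (δ * dist x y) :=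
          norm_add_le_of_le
            (norm_mul_le_of_le (hf.norm_sub_le_mul_dist x hx y hy) (hg.norm_le x hx))
            (norm_mul_le_of_le (hf.norm_le y hy) (hg.norm_sub_le_mul_dist x hx y hy))
      _ = 2 * ε * δ * dist x y := by ring

section Hausdorff

variable {E : Type*} [NormedAddCommGroup E] {f : E → E} {S T : Set E} {ε d : ℝ}

lemma antilipschitzWith_domRestrict (hf : LipBoundOn (fun x => f x - x) S ε) (hε : ε < 1) :
    AntilipschitzWith (Real.toNNReal (1 - ε)⁻¹) (S.domRestrict f) := by
  have hpos : 0 < 1 - ε := sub_pos.2 hε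
  refine AntilipschitzWith.of_le_mul_dist fun x y => ?_
  have htri : ‖(x : E) - y‖ ≤ ‖f x - f y‖ + ‖(f x - x) - (f y - y)‖ := by
    rw [show (x : E) - y = (f x - f y) - ((f x - x) - (f y - y)) by abel]
    exact norm_sub_le _ _
  have hlip := hf.norm_sub_le_mul_dist x x.2 y y.2
  rw [dist_eq_norm] at hlip
  rw [Real.coe_toNNReal _ (inv_nonneg.2 hpos.le), Subtype.dist_eq, dist_eq_norm, dist_eq_norm,
    inv_mul_eq_div, le_div_iff₀ hpos, domRestrict_apply, domRestrict_apply]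
  linarith

lemma mapsTo_ball {Q : E} {r : ℝ} (hf : LipBoundOn (fun x => f x - x) S ε) (hS : S ⊆ ball Q r) :
    MapsTo f S (ball Q (r + ε)) := fun x hx =>
  calc dist (f x) Q ≤ dist (f x) x + dist x Q := dist_triangle _ _ _
    _ = dist x Q + ‖f x - x‖ := by rw [dist_eq_norm, add_comm]
    _ < r + ε := add_lt_add_of_lt_of_le (hS hx) (hf.norm_le x hx)

lemma hausdorffMeasure_le [MeasurableSpace E] [BorelSpace E]
    (hf : LipBoundOn (fun x => f x - x) S ε) (hε : ε < 1) (hd : 0 ≤ d) (hST : MapsTo f S T) :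
    μH[d] S ≤ ENNReal.ofReal (1 - ε)⁻¹ ^ d * μH[d] T :=
  calc μH[d] S = μH[d] (univ : Set S) := by
        rw [← (isometry_subtype_coe (s := S)).hausdorffMeasure_image (Or.inl hd), image_univ,
          Subtype.range_coe]
    _ ≤ ENNReal.ofReal (1 - ε)⁻¹ ^ d * μH[d] (S.domRestrict f '' univ) :=
        (hf.antilipschitzWith_domRestrict hε).le_hausdorffMeasure_image hd univ
    _ ≤ ENNReal.ofReal (1 - ε)⁻¹ ^ d * μH[d] T := by
        gcongr
        rw [image_univ, range_domRestrict]
        exact hST.image_subset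

end Hausdorff

end LipBoundOn

lemma continuousAt_measure_ball {X : Type*} [PseudoMetricSpace X] [MeasurableSpace X]
    [OpensMeasurableSpace X] {ν : Measure X} {x : X} {r R : ℝ} (hrR : r < R)
    (hfin : ν (ball x R) ≠ ∞) (hsphere : ν (sphere x r) = 0) :
    ContinuousAt (fun t => ν (ball x t)) r := by
  refine tendsto_measure_of_ae_tendsto_indicator (𝓝 r) measurableSet_ball
    (fun _ => measurableSet_ball) measurableSet_ball hfin ?_ ?_
  · filter_upwards [gt_mem_nhds hrR] with t ht using ball_subset_ball ht.le
  · have hae : ∀ᵐ y ∂ν, y ∉ sphere x r := measure_eq_zero_iff_ae_notMem.1 hsphere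
    filter_upwards [hae] with y hy
    rcases lt_or_gt_of_ne hy with hlt | hgt
    · filter_upwards [lt_mem_nhds hlt] with t ht
      exact iff_of_true ht hlt
    · filter_upwards [gt_mem_nhds hgt] with t ht
      exact iff_of_false ht.not_gt hgt.not_gt

lemma tendsto_ofReal_inv_one_sub_rpow {ι : Type*} {l : Filter ι} {ε : ι → ℝ}
    (hε : Tendsto ε l (𝓝 0)) (d : ℝ) :
    Tendsto (fun i => ENNReal.ofReal (1 - ε i)⁻¹ ^ d) l (𝓝 1) := by
  have hinv : Tendsto (fun i => (1 - ε i)⁻¹) l (𝓝 1) := by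
    simpa using (tendsto_const_nhds (x := (1 : ℝ))).sub hε |>.inv₀ (by norm_num)
  simpa using (ENNReal.tendsto_ofReal hinv).ennrpow_const d

/- Both inequalities come from bi-Lipschitz comparison: `S i` embeds almost isometrically into
`T ∩ ball Q (α + ε i)`, and `T ∩ ball Q (α - ε i)` embeds almost isometrically into `S i`. -/
lemma tendsto_hausdorffMeasure_of_lipBoundOn {ι E : Type*} [NormedAddCommGroup E]
    [MeasurableSpace E] [BorelSpace E] {l : Filter ι} {S : ι → Set E}
    {T : Set E} {Q : E} {α R d : ℝ} {ε : ι → ℝ} (hd : 0 ≤ d) (hε : Tendsto ε l (𝓝 0))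
    (hR : α < R) (hfin : μH[d] (ball Q R ∩ T) ≠ ∞) (hsphere : μH[d] (sphere Q α ∩ T) = 0)
    (hto : ∀ᶠ i in l, ∃ f : E → E, LipBoundOn (fun x => f x - x) (S i) (ε i) ∧
      MapsTo f (S i) (ball Q (α + ε i) ∩ T))
    (hfrom : ∀ᶠ i in l, ∃ f : E → E,
      LipBoundOn (fun x => f x - x) (ball Q (α - ε i) ∩ T) (ε i) ∧
        MapsTo f (ball Q (α - ε i) ∩ T) (S i)) :
    Tendsto (fun i => μH[d] (S i)) l (𝓝 (μH[d] (ball Q α ∩ T))) := by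
  have hrestrict : ∀ r, μH[d] (ball Q r ∩ T) = (μH[d] : Measure E).restrict T (ball Q r) :=
    fun r => (Measure.restrict_apply measurableSet_ball).symm
  have hcont : ContinuousAt (fun r => μH[d] (ball Q r ∩ T)) α := by
    simp only [hrestrict] at hfin ⊢
    refine continuousAt_measure_ball hR hfin ?_
    rwa [Measure.restrict_apply isClosed_sphere.measurableSet]
  have hm : μH[d] (ball Q α ∩ T) ≠ ∞ :=
    measure_ne_top_of_subset (inter_subset_inter_left T (ball_subset_ball hR.le)) hfin
  have hratio := tendsto_ofReal_inv_one_sub_rpow hε d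
  have hlower : Tendsto
      (fun i => μH[d] (ball Q (α - ε i) ∩ T) / ENNReal.ofReal (1 - ε i)⁻¹ ^ d) l
      (𝓝 (μH[d] (ball Q α ∩ T))) := by
    have hball := hcont.tendsto.comp (by simpa using hε.const_sub α)
    simpa using ENNReal.Tendsto.div hball (Or.inr one_ne_zero) hratio (Or.inr hm)
  have hupper : Tendsto
      (fun i => ENNReal.ofReal (1 - ε i)⁻¹ ^ d * μH[d] (ball Q (α + ε i) ∩ T)) l
      (𝓝 (μH[d] (ball Q α ∩ T))) := by
    have hball := hcont.tendsto.comp (by simpa using hε.const_add α)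
    simpa using ENNReal.Tendsto.mul hratio (Or.inl one_ne_zero) hball (Or.inr ENNReal.one_ne_top)
  have hlt : ∀ᶠ i in l, ε i < 1 := hε.eventually_lt_const one_pos
  refine tendsto_of_tendsto_of_tendsto_of_le_of_le' hlower hupper ?_ ?_
  · filter_upwards [hlt, hfrom] with i hi ⟨f, hf, hmaps⟩
    exact ENNReal.div_le_of_le_mul' (hf.hausdorffMeasure_le hi hd hmaps)
  · filter_upwards [hlt, hto] with i hi ⟨f, hf, hmaps⟩
    exact hf.hausdorffMeasure_le hi hd hmaps

lemma finite_setOf_norm_add_smul_eq {E : Type*} [NormedAddCommGroup E] [InnerProductSpace ℝ E]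
    (c : E) {w : E} (hw : w ≠ 0) (r : ℝ) : {t : ℝ | ‖c + t • w‖ = r}.Finite := by
  set p : Polynomial ℝ := Polynomial.C (‖w‖ ^ 2) * Polynomial.X ^ 2 +
    Polynomial.C (2 * inner ℝ c w) * Polynomial.X + Polynomial.C (‖c‖ ^ 2 - r ^ 2) with hp
  have hdeg : p.natDegree = 2 := Polynomial.natDegree_quadratic (by positivity)
  have hp0 : p ≠ 0 := Polynomial.ne_zero_of_natDegree_gt (n := 1) (by omega)
  refine (Polynomial.finite_setOfPred_isRoot hp0).subset fun t (ht : ‖c + t • w‖ = r) => ?_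
  have hsq : ‖c‖ ^ 2 + 2 * (t * inner ℝ c w) + t ^ 2 * ‖w‖ ^ 2 = r ^ 2 := by
    rw [← ht, norm_add_sq_real, norm_smul, inner_smul_right, mul_pow, Real.norm_eq_abs, sq_abs]
  simp only [mem_ofPred_eq, Polynomial.IsRoot, hp, Polynomial.eval_add, Polynomial.eval_mul,
    Polynomial.eval_C, Polynomial.eval_pow, Polynomial.eval_X]
  linarith

section Parametrization

variable {ι E : Type*} [Fintype ι] [NormedAddCommGroup E] {F : (ι → ℝ) → E}

/-- Along each line in direction `v` the set has at most two points, so Fubini applies. -/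
lemma volume_preimage_sphere_eq_zero [InnerProductSpace ℝ E] (hF : Continuous F) (v : ι → ℝ)
    (hline : ∀ x, ∃ w ≠ 0, ∀ t : ℝ, F (x + t • v) = F x + t • w) (Q : E) (r : ℝ) :
    volume (F ⁻¹' sphere Q r) = 0 := by
  have hclosed : IsClosed (F ⁻¹' sphere Q r) := isClosed_sphere.preimage hF
  suffices h : ∀ᵐ x, x ∈ (F ⁻¹' sphere Q r)ᶜ from measure_eq_zero_iff_ae_notMem.2 h
  refine ae_mem_of_ae_add_linearMap_mem (LinearMap.toSpanSingleton ℝ _ v) volume volume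
    hclosed.measurableSet.compl fun x => ?_
  obtain ⟨w, hw, hFw⟩ := hline x
  refine measure_eq_zero_iff_ae_notMem.1
    (((finite_setOf_norm_add_smul_eq (F x - Q) hw r).subset fun t ht => ?_).measure_zero volume)
  have ht : F (x + t • v) ∈ sphere Q r := ht
  rwa [mem_sphere, dist_eq_norm, hFw, add_sub_right_comm] at ht

variable [NormedSpace ℝ E] [MeasurableSpace E] [BorelSpace E]

lemma exists_hausdorffMeasure_image_le (hF : ContDiff ℝ 1 F) {K : Set (ι → ℝ)} (hK : IsCompact K)
    (hKc : Convex ℝ K) :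
    ∃ C : NNReal, ∀ N ⊆ K, μH[Fintype.card ι] (F '' N) ≤ C * volume N := by
  obtain ⟨L, hL⟩ := (hF.contDiffOn (s := K)).exists_lipschitzOnWith one_ne_zero hKc hK
  refine ⟨L ^ Fintype.card ι, fun N hN => ?_⟩
  simpa [hausdorffMeasure_pi_real] using
    (hL.mono hN).hausdorffMeasure_image_le (Nat.cast_nonneg (Fintype.card ι))

end Parametrization

section SpectralGap

open scoped Matrix.Norms.Frobenius

variable {ι : Type*} [Fintype ι]

lemma dotProduct_self_nonneg (v : ι → ℝ) : 0 ≤ v ⬝ᵥ v :=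
  Finset.sum_nonneg fun i _ => mul_self_nonneg (v i)

lemma dotProduct_sq_le (u v : ι → ℝ) : (u ⬝ᵥ v) ^ 2 ≤ (u ⬝ᵥ u) * (v ⬝ᵥ v) := by
  simpa only [dotProduct, ← sq] using Finset.sum_mul_sq_le_sq_mul_sq Finset.univ u v

lemma frobenius_norm_sq (A : Matrix ι ι ℝ) : ‖A‖ ^ 2 = ∑ i, ∑ j, A i j ^ 2 := by
  rw [frobenius_norm_def, ← Real.sqrt_eq_rpow, Real.sq_sqrt (by positivity)]
  simp

lemma abs_dotProduct_mulVec_le (A : Matrix ι ι ℝ) (u v : ι → ℝ) :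
    |u ⬝ᵥ A *ᵥ v| ≤ ‖A‖ * √((u ⬝ᵥ u) * (v ⬝ᵥ v)) := by
  have hbilin : u ⬝ᵥ A *ᵥ v = ∑ p : ι × ι, A p.1 p.2 * (u p.1 * v p.2) := by
    rw [Fintype.sum_prod_type]
    simp only [dotProduct, mulVec, Finset.mul_sum, mul_left_comm]
  have hprod : (u ⬝ᵥ u) * (v ⬝ᵥ v) = ∑ p : ι × ι, (u p.1 * v p.2) ^ 2 := by
    rw [Fintype.sum_prod_type, dotProduct, dotProduct, Finset.sum_mul_sum]
    exact Finset.sum_congr rfl fun i _ => Finset.sum_congr rfl fun j _ => by ring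
  rw [← Real.sqrt_sq (norm_nonneg A), ← Real.sqrt_mul (sq_nonneg _), frobenius_norm_sq,
    ← Fintype.sum_prod_type', hprod, hbilin]
  exact Real.abs_le_sqrt (Finset.sum_mul_sq_le_sq_mul_sq _ _ _)

lemma abs_dotProduct_mulVec_self_le (A : Matrix ι ι ℝ) (v : ι → ℝ) :
    |v ⬝ᵥ A *ᵥ v| ≤ ‖A‖ * (v ⬝ᵥ v) := by
  have hv : 0 ≤ v ⬝ᵥ v := dotProduct_self_nonneg v
  simpa only [Real.sqrt_mul_self hv] using abs_dotProduct_mulVec_le A v v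

lemma dotProduct_mulVec_self_le_of_eigenvalue_le {A : Matrix ι ι ℝ} (hA : A.IsSymm) {lam : ℝ}
    (hlam : ∀ (μ : ℝ) (v : ι → ℝ), v ≠ 0 → A *ᵥ v = μ • v → μ ≤ lam) (v : ι → ℝ) :
    v ⬝ᵥ A *ᵥ v ≤ lam * (v ⬝ᵥ v) := by
  classical
  have hherm : (lam • (1 : Matrix ι ι ℝ) - A).IsHermitian := by
    simp [IsHermitian, conjTranspose_eq_transpose_of_trivial, hA.eq]
  have hpos : (lam • (1 : Matrix ι ι ℝ) - A).PosSemidef := by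
    rw [hherm.posSemidef_iff_eigenvalues_nonneg]
    intro j
    have heig := hherm.mulVec_eigenvectorBasis j
    rw [sub_mulVec, smul_mulVec, one_mulVec, sub_eq_iff_eq_add, ← sub_eq_iff_eq_add', ← sub_smul]
      at heig
    have hne : (hherm.eigenvectorBasis j).ofLp ≠ 0 := by
      simpa using hherm.eigenvectorBasis.toBasis.ne_zero j
    have hle := hlam _ _ hne heig.symm
    simp only [Pi.zero_apply]
    linarith
  have hnonneg := hpos.dotProduct_mulVec_nonneg v
  simp only [star_trivial, sub_mulVec, smul_mulVec, one_mulVec, dotProduct_sub, dotProduct_smul,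
    smul_eq_mul] at hnonneg
  linarith

/-- The unit vector `n` is an eigenvector of `A` with eigenvalue `lam`, and on `n^⊥` the quadratic
form of `A` stays below `lam - γ`. For symmetric `A` and `γ > 0` this says that `lam` is the largest
eigenvalue and is separated from the rest of the spectrum by at least `γ`. -/
structure HasSpectralGap (A : Matrix ι ι ℝ) (lam : ℝ) (n : ι → ℝ) (γ : ℝ) : Prop where
  unit : n ⬝ᵥ n = 1
  eigen : A *ᵥ n = lam • n
  gap : ∀ v, n ⬝ᵥ v = 0 → v ⬝ᵥ A *ᵥ v ≤ (lam - γ) * (v ⬝ᵥ v)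

lemma dotProduct_sub_proj {n : ι → ℝ} (hn : n ⬝ᵥ n = 1) (v : ι → ℝ) :
    n ⬝ᵥ (v - (n ⬝ᵥ v) • n) = 0 := by
  rw [dotProduct_sub, dotProduct_smul, hn, smul_eq_mul, mul_one, sub_self]

lemma dotProduct_self_sub_proj {n : ι → ℝ} (hn : n ⬝ᵥ n = 1) (v : ι → ℝ) :
    (v - (n ⬝ᵥ v) • n) ⬝ᵥ (v - (n ⬝ᵥ v) • n) = v ⬝ᵥ v - (n ⬝ᵥ v) ^ 2 := by
  simp only [sub_dotProduct, dotProduct_sub, smul_dotProduct, dotProduct_smul, smul_eq_mul, hn,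
    dotProduct_comm v n]
  ring

lemma sq_dotProduct_le_of_orthogonal {m n v : ι → ℝ} (hn : n ⬝ᵥ n = 1) (hv : n ⬝ᵥ v = 0) :
    (m ⬝ᵥ v) ^ 2 ≤ (m ⬝ᵥ m - (n ⬝ᵥ m) ^ 2) * (v ⬝ᵥ v) := by
  have hproj : (m - (n ⬝ᵥ m) • n) ⬝ᵥ v = m ⬝ᵥ v := by
    rw [sub_dotProduct, smul_dotProduct, hv, smul_zero, sub_zero]
  simpa only [hproj, dotProduct_self_sub_proj hn m] using dotProduct_sq_le (m - (n ⬝ᵥ m) • n) v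

lemma hasSpectralGap_of_norm_sub_le [DecidableEq ι] {A : Matrix ι ι ℝ} {s c δ lam : ℝ}
    {m n : ι → ℝ} (hs : 0 ≤ s) (hm : m ⬝ᵥ m = 1) (hn : n ⬝ᵥ n = 1)
    (hA : ‖A - (s • vecMulVec m m + c • (1 : Matrix ι ι ℝ))‖ ≤ δ) (heig : A *ᵥ n = lam • n)
    (hmax : ∀ v, v ⬝ᵥ A *ᵥ v ≤ lam * (v ⬝ᵥ v)) :
    HasSpectralGap A lam n (s - 4 * δ) := by
  have hquad (v : ι → ℝ) :
      |v ⬝ᵥ A *ᵥ v - (s * (m ⬝ᵥ v) ^ 2 + c * (v ⬝ᵥ v))| ≤ δ * (v ⬝ᵥ v) := by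
    have hdiff : v ⬝ᵥ (A - (s • vecMulVec m m + c • (1 : Matrix ι ι ℝ))) *ᵥ v =
        v ⬝ᵥ A *ᵥ v - (s * (m ⬝ᵥ v) ^ 2 + c * (v ⬝ᵥ v)) := by
      simp [sub_mulVec, add_mulVec, smul_mulVec, vecMulVec_mulVec, dotProduct_comm v m, sq]
    rw [← hdiff]
    exact (abs_dotProduct_mulVec_self_le _ v).trans
      (mul_le_mul_of_nonneg_right hA (dotProduct_self_nonneg v))
  have hlower : s + c - δ ≤ lam := by
    have hquad_m := (abs_le.1 (hquad m)).1
    have hmax_m := hmax m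
    rw [hm] at hquad_m hmax_m
    linarith
  have hupper : lam ≤ s * (n ⬝ᵥ m) ^ 2 + c + δ := by
    have hquad_n := (abs_le.1 (hquad n)).2
    rw [heig, dotProduct_smul, hn, dotProduct_comm m n, smul_eq_mul] at hquad_n
    linarith
  refine ⟨hn, heig, fun v hv => ?_⟩
  have hv0 : 0 ≤ v ⬝ᵥ v := dotProduct_self_nonneg v
  have hbessel := sq_dotProduct_le_of_orthogonal (m := m) hn hv
  rw [hm] at hbessel
  calc v ⬝ᵥ A *ᵥ v ≤ s * (m ⬝ᵥ v) ^ 2 + c * (v ⬝ᵥ v) + δ * (v ⬝ᵥ v) := by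
        linarith [(abs_le.1 (hquad v)).2]
    _ ≤ s * ((1 - (n ⬝ᵥ m) ^ 2) * (v ⬝ᵥ v)) + c * (v ⬝ᵥ v) + δ * (v ⬝ᵥ v) := by gcongr
    _ = (s * (1 - (n ⬝ᵥ m) ^ 2) + c + δ) * (v ⬝ᵥ v) := by ring
    _ ≤ (lam - (s - 4 * δ)) * (v ⬝ᵥ v) := by
        refine mul_le_mul_of_nonneg_right ?_ hv0
        linarith

namespace HasSpectralGap

variable {A A' : Matrix ι ι ℝ} {lam lam' γ : ℝ} {n n' : ι → ℝ}

lemma eq_smul_of_eigen (h : HasSpectralGap A lam n γ) (hγ : 0 < γ) {v : ι → ℝ}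
    (hv : A *ᵥ v = lam • v) : v = (n ⬝ᵥ v) • n := by
  set w := v - (n ⬝ᵥ v) • n with hw
  have heig : A *ᵥ w = lam • w := by
    rw [hw, mulVec_sub, mulVec_smul, hv, h.eigen, smul_sub, smul_comm]
  have hgap := h.gap w (dotProduct_sub_proj h.unit v)
  rw [heig, dotProduct_smul, smul_eq_mul] at hgap
  have hw0 : w ⬝ᵥ w = 0 := by nlinarith [dotProduct_self_nonneg w]
  exact sub_eq_zero.1 (dotProduct_self_eq_zero.1 hw0)

lemma sin_sq_le_of_le (h : HasSpectralGap A lam n γ) (hγ : 0 < γ) (hn' : n' ⬝ᵥ n' = 1)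
    (heig' : A' *ᵥ n' = lam' • n') (hlam : lam ≤ lam') :
    γ ^ 2 * (1 - (n ⬝ᵥ n') ^ 2) ≤ ‖A - A'‖ ^ 2 := by
  set w := n' - (n ⬝ᵥ n') • n with hw
  have horth : n ⬝ᵥ w = 0 := dotProduct_sub_proj h.unit n'
  have hnorm : w ⬝ᵥ w = 1 - (n ⬝ᵥ n') ^ 2 := by rw [dotProduct_self_sub_proj h.unit, hn']
  have hw0 : 0 ≤ w ⬝ᵥ w := dotProduct_self_nonneg w
  have hwn' : w ⬝ᵥ n' = w ⬝ᵥ w := by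
    rw [show w ⬝ᵥ w = w ⬝ᵥ n' - (n ⬝ᵥ n') * (w ⬝ᵥ n) by
      rw [← smul_eq_mul, ← dotProduct_smul, ← dotProduct_sub], dotProduct_comm w n, horth]
    ring
  have hquad : w ⬝ᵥ A *ᵥ w = w ⬝ᵥ (A - A') *ᵥ n' + lam' * (w ⬝ᵥ w) := by
    have hAw : A *ᵥ w = (A - A') *ᵥ n' + lam' • n' - ((n ⬝ᵥ n') * lam) • n := by
      rw [sub_mulVec, heig', hw, mulVec_sub, mulVec_smul, h.eigen, smul_smul, sub_add_cancel]
    rw [hAw, dotProduct_sub, dotProduct_add, dotProduct_smul, dotProduct_smul, hwn',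
      dotProduct_comm w n, horth, smul_zero, sub_zero, smul_eq_mul]
  have hpert : γ * (w ⬝ᵥ w) ≤ ‖A - A'‖ * √(w ⬝ᵥ w) := by
    have hgap := h.gap w horth
    have hcs := (abs_le.1 (abs_dotProduct_mulVec_le (A - A') w n')).1
    rw [hn', mul_one] at hcs
    nlinarith
  have hsqrt := Real.mul_self_sqrt hw0
  have hlin : γ * √(w ⬝ᵥ w) ≤ ‖A - A'‖ := by
    rcases (Real.sqrt_nonneg (w ⬝ᵥ w)).eq_or_lt with hzero | hpos
    · rw [← hzero, mul_zero]; exact norm_nonneg _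
    · exact le_of_mul_le_mul_right (by rwa [mul_assoc, hsqrt]) hpos
  rw [← hnorm, ← hsqrt, ← sq, ← mul_pow]
  gcongr

/-- The Davis–Kahan `sin θ` estimate, in the Frobenius norm. -/
lemma sin_sq_le (h : HasSpectralGap A lam n γ) (h' : HasSpectralGap A' lam' n' γ) (hγ : 0 < γ) :
    γ ^ 2 * (1 - (n ⬝ᵥ n') ^ 2) ≤ ‖A - A'‖ ^ 2 := by
  rcases le_total lam lam' with hle | hle
  · exact h.sin_sq_le_of_le hγ h'.unit h'.eigen hle
  · rw [dotProduct_comm, norm_sub_rev]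
    exact h'.sin_sq_le_of_le hγ h.unit h.eigen hle

end HasSpectralGap

section Selection

variable {X : Type*} [PseudoMetricSpace X] {A : X → Matrix ι ι ℝ} {n : X → ι → ℝ} {U : Set X}
  {γ : ℝ}

lemma dotProduct_pos_of_continuousOn_selection (hA : LipschitzWith 1 A) (hγ : 0 < γ)
    (hU : IsPreconnected U) (hn : ContinuousOn n U)
    (hgap : ∀ x ∈ U, ∃ lam, HasSpectralGap (A x) lam (n x) γ)
    (hdiam : ∀ x ∈ U, ∀ y ∈ U, dist x y < γ) {x y : X} (hx : x ∈ U) (hy : y ∈ U) :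
    0 < n x ⬝ᵥ n y := by
  by_contra! hneg
  obtain ⟨lam, hgx⟩ := hgap x hx
  have hcont : ContinuousOn (fun z => n x ⬝ᵥ n z) U :=
    (Continuous.dotProduct continuous_const continuous_id).comp_continuousOn hn
  obtain ⟨z, hz, hxz⟩ := hU.intermediate_value hy hx hcont
    (show (0 : ℝ) ∈ Icc _ _ from ⟨hneg, by rw [hgx.unit]; exact zero_le_one⟩)
  obtain ⟨lam', hgz⟩ := hgap z hz
  have hsin := hgx.sin_sq_le hgz hγ
  have hdist : ‖A x - A z‖ < γ := by
    rw [← dist_eq_norm]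
    exact (hA.dist_le_mul x z).trans_lt (by simpa using hdiam x hx z hz)
  have hxz : n x ⬝ᵥ n z = 0 := hxz
  rw [hxz] at hsin
  nlinarith [norm_nonneg (A x - A z)]

lemma norm_le_sqrt_dotProduct_self (v : ι → ℝ) : ‖v‖ ≤ √(v ⬝ᵥ v) := by
  refine (pi_norm_le_iff_of_nonneg (Real.sqrt_nonneg _)).2 fun i => Real.abs_le_sqrt ?_
  rw [sq]
  exact Finset.single_le_sum (f := fun j => v j * v j) (fun j _ => mul_self_nonneg _)
    (Finset.mem_univ i)

lemma lipBoundOn_selection (hA : LipschitzWith 1 A) (hγ : 0 < γ)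
    (hgap : ∀ x ∈ U, ∃ lam, HasSpectralGap (A x) lam (n x) γ)
    (hpos : ∀ x ∈ U, ∀ y ∈ U, 0 < n x ⬝ᵥ n y) : LipBoundOn n U (1 + 2 / γ) where
  norm_le x hx := by
    obtain ⟨lam, hgx⟩ := hgap x hx
    have hnorm := norm_le_sqrt_dotProduct_self (n x)
    rw [hgx.unit, Real.sqrt_one] at hnorm
    exact hnorm.trans (le_add_of_nonneg_right (by positivity))
  norm_sub_le_mul_dist x hx y hy := by
    obtain ⟨lam, hgx⟩ := hgap x hx
    obtain ⟨lam', hgy⟩ := hgap y hy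
    have hdist : ‖A x - A y‖ ≤ dist x y := by
      simpa [dist_eq_norm] using hA.dist_le_mul x y
    have hsub : (n x - n y) ⬝ᵥ (n x - n y) = 2 * (1 - n x ⬝ᵥ n y) := by
      simp only [sub_dotProduct, dotProduct_sub, hgx.unit, hgy.unit, dotProduct_comm (n y) (n x)]
      ring
    have hle_one : n x ⬝ᵥ n y ≤ 1 := by
      linarith [dotProduct_self_nonneg (n x - n y)]
    have hsin : γ ^ 2 * (1 - n x ⬝ᵥ n y) ≤ dist x y ^ 2 :=
      calc γ ^ 2 * (1 - n x ⬝ᵥ n y) ≤ γ ^ 2 * (1 - (n x ⬝ᵥ n y) ^ 2) := by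
            gcongr; nlinarith [hpos x hx y hy]
        _ ≤ ‖A x - A y‖ ^ 2 := hgx.sin_sq_le hgy hγ
        _ ≤ dist x y ^ 2 := by gcongr
    calc ‖n x - n y‖ ≤ √((n x - n y) ⬝ᵥ (n x - n y)) := norm_le_sqrt_dotProduct_self _
      _ ≤ 2 / γ * dist x y := by
          refine Real.sqrt_le_iff.2 ⟨by positivity, ?_⟩
          rw [hsub, mul_pow, div_pow, div_mul_eq_mul_div, le_div_iff₀ (by positivity)]
          nlinarith [sq_nonneg (dist x y)]
      _ ≤ (1 + 2 / γ) * dist x y := by gcongr; linarith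

end Selection

end SpectralGap

section Tilt

open scoped Matrix.Norms.Frobenius

variable {ι : Type*}

/-- The infinitesimal rotation `v ↦ (h ⬝ᵥ v) • e - (e ⬝ᵥ v) • h` in the plane of `h` and `e`, as a
linear function of `h`. -/
def skewMap (e : ι → ℝ) : (ι → ℝ) →ₗ[ℝ] Matrix ι ι ℝ where
  toFun h := vecMulVec e h - vecMulVec h e
  map_add' h k := by rw [vecMulVec_add, add_vecMulVec]; abel
  map_smul' c h := by rw [vecMulVec_smul, smul_vecMulVec, RingHom.id_apply, smul_sub]

lemma skewMap_apply (e h : ι → ℝ) : skewMap e h = vecMulVec e h - vecMulVec h e := rfl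

lemma transpose_skewMap (e h : ι → ℝ) : (skewMap e h)ᵀ = -skewMap e h := by
  rw [skewMap_apply, transpose_sub, transpose_vecMulVec, transpose_vecMulVec, neg_sub]

variable [Fintype ι]

lemma skewMap_mulVec (e h v : ι → ℝ) :
    skewMap e h *ᵥ v = (h ⬝ᵥ v) • e - (e ⬝ᵥ v) • h := by
  simp [skewMap_apply, sub_mulVec, vecMulVec_mulVec]

variable [DecidableEq ι]

lemma rodrigues_mem_orthogonalGroup {J : Matrix ι ι ℝ} (hJt : Jᵀ = -J)
    (hJ : J ^ 3 = -J) {s c : ℝ} (hsc : s ^ 2 + c ^ 2 = 1) :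
    1 + s • J + (1 - c) • J ^ 2 ∈ orthogonalGroup ι ℝ := by
  have htranspose : (1 + s • J + (1 - c) • J ^ 2)ᵀ = 1 - s • J + (1 - c) • J ^ 2 := by
    simp [transpose_pow, hJt, sub_eq_add_neg]
  have hJ4 : J ^ 2 * J ^ 2 = -J ^ 2 := by
    rw [← pow_add, pow_succ J 3, hJ, neg_mul, sq]
  have hcomm : J * J ^ 2 = J ^ 2 * J := (Commute.self_pow J 2).eq
  rw [mem_orthogonalGroup_iff, htranspose]
  calc (1 + s • J + (1 - c) • J ^ 2) * (1 - s • J + (1 - c) • J ^ 2)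
      = 1 + (2 * (1 - c) - s ^ 2) • J ^ 2 + (1 - c) ^ 2 • (J ^ 2 * J ^ 2) := by
        simp only [add_mul, mul_add, mul_sub, one_mul, mul_one, smul_mul_smul_comm, hcomm,
          (sq J).symm]
        module
    _ = 1 + (1 - (s ^ 2 + c ^ 2)) • J ^ 2 := by rw [hJ4]; module
    _ = 1 := by rw [hsc, sub_self, zero_smul, add_zero]

/-- The rotation in the plane of the orthonormal vectors `h` and `e` that moves `h` towards `e`
through the angle `arcsin s`, written with Rodrigues' formula. -/
def tiltMatrix (e h : ι → ℝ) (s : ℝ) : Matrix ι ι ℝ :=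
  1 + s • skewMap e h + (1 - √(1 - s ^ 2)) • skewMap e h ^ 2

variable {e h : ι → ℝ}

lemma skewMap_pow_three (he : e ⬝ᵥ e = 1) (hh : h ⬝ᵥ h = 1) (heh : e ⬝ᵥ h = 0) :
    skewMap e h ^ 3 = -skewMap e h := by
  refine ext_of_mulVec_single fun j => ?_
  generalize (Pi.single j 1 : ι → ℝ) = v
  rw [pow_three, ← mulVec_mulVec, ← mulVec_mulVec]
  simp [skewMap_mulVec, neg_mulVec, he, hh, heh, dotProduct_comm h e, neg_add_eq_sub]

lemma tiltMatrix_mem_orthogonalGroup (he : e ⬝ᵥ e = 1) (hh : h ⬝ᵥ h = 1) (heh : e ⬝ᵥ h = 0)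
    {s : ℝ} (hs : |s| ≤ 1) : tiltMatrix e h s ∈ orthogonalGroup ι ℝ :=
  rodrigues_mem_orthogonalGroup (transpose_skewMap e h) (skewMap_pow_three he hh heh) <| by
    rw [Real.sq_sqrt (sub_nonneg.2 ((sq_le_one_iff_abs_le_one s).2 hs)), add_sub_cancel]

lemma tiltMatrix_mulVec (he : e ⬝ᵥ e = 1) (hh : h ⬝ᵥ h = 1) (heh : e ⬝ᵥ h = 0) (s a b : ℝ) :
    tiltMatrix e h s *ᵥ (a • h + b • e) =
      (√(1 - s ^ 2) * a - s * b) • h + (s * a + √(1 - s ^ 2) * b) • e := by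
  have hskew (a b : ℝ) : skewMap e h *ᵥ (a • h + b • e) = (-b) • h + a • e := by
    simp [skewMap_mulVec, dotProduct_add, dotProduct_smul, he, hh, heh, dotProduct_comm h e,
      sub_eq_add_neg, add_comm]
  rw [tiltMatrix, add_mulVec, add_mulVec, one_mulVec, smul_mulVec, smul_mulVec,
    sq (skewMap e h), ← mulVec_mulVec, hskew, hskew]
  module

lemma one_sub_sqrt_one_sub_sq_nonneg (s : ℝ) : 0 ≤ 1 - √(1 - s ^ 2) :=
  sub_nonneg.2 (Real.sqrt_le_one.2 (sub_le_self 1 (sq_nonneg s)))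

lemma one_sub_sqrt_one_sub_sq_le {s : ℝ} (hs : |s| ≤ 1) : 1 - √(1 - s ^ 2) ≤ |s| := by
  rw [sub_le_comm]
  refine Real.le_sqrt_of_sq_le ?_
  nlinarith [sq_abs s, abs_nonneg s]

lemma exists_norm_linearMap_le {E F : Type*} [NormedAddCommGroup E] [NormedSpace ℝ E]
    [FiniteDimensional ℝ E] [NormedAddCommGroup F] [NormedSpace ℝ F] (φ : E →ₗ[ℝ] F) :
    ∃ C ≥ 0, ∀ x, ‖φ x‖ ≤ C * ‖x‖ :=
  ⟨‖φ.toContinuousLinearMap‖, norm_nonneg _, φ.toContinuousLinearMap.le_opNorm⟩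

variable {X : Type*} [PseudoMetricSpace X] {M L : ℝ}

lemma exists_lipBoundOn_tiltMatrix_sub_one (e : ι → ℝ) (hL : 0 ≤ L) :
    ∃ B ≥ 0, ∀ {S : Set X} {h : X → ι → ℝ} {s : ℝ}, LipBoundOn h S L → |s| ≤ 1 →
      LipBoundOn (fun x => tiltMatrix e (h x) s - 1) S (B * |s|) := by
  obtain ⟨C, hC0, hC⟩ := exists_norm_linearMap_le (skewMap e)
  refine ⟨C * L + 2 * (C * L) ^ 2, by positivity, fun {S h s} hh hs => ?_⟩
  have hJ := hh.linearMap_comp (skewMap e) hC0 hC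
  have hκ : |1 - √(1 - s ^ 2)| ≤ |s| := by
    rw [abs_of_nonneg (one_sub_sqrt_one_sub_sq_nonneg s)]
    exact one_sub_sqrt_one_sub_sq_le hs
  have hsum := (hJ.const_smul s).add ((hJ.mul hJ).const_smul (1 - √(1 - s ^ 2)))
  refine LipBoundOn.mono (by simpa [tiltMatrix, add_assoc, sq (skewMap e _)] using hsum) ?_
  calc |s| * (C * L) + |1 - √(1 - s ^ 2)| * (2 * (C * L) * (C * L))
      ≤ |s| * (C * L) + |s| * (2 * (C * L) * (C * L)) := by gcongr
    _ = (C * L + 2 * (C * L) ^ 2) * |s| := by ring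

lemma exists_lipBoundOn_tiltMatrix_conj_sub (e : ι → ℝ) (hM : 0 ≤ M) (hL : 0 ≤ L) :
    ∃ C ≥ 0, ∀ {S : Set X} {A : X → Matrix ι ι ℝ} {h : X → ι → ℝ} {s : ℝ},
      LipBoundOn A S M → LipBoundOn h S L → |s| ≤ 1 →
      LipBoundOn (fun x => tiltMatrix e (h x) s * A x * (tiltMatrix e (h x) s)ᵀ - A x) S
        (C * |s|) := by
  obtain ⟨B, hB, hbound⟩ := exists_lipBoundOn_tiltMatrix_sub_one (X := X) e hL
  set N : ℝ := ‖(1 : Matrix ι ι ℝ)‖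
  refine ⟨4 * B * M * (N + B) + 2 * M * B, by positivity, fun {S A h s} hA hh hs => ?_⟩
  have hK := hbound hh hs
  have hKt : LipBoundOn (fun x => (tiltMatrix e (h x) s - 1)ᵀ) S (B * |s|) := by
    simpa using hK.linearMap_comp (transposeLinearEquiv ι ι ℝ ℝ).toLinearMap zero_le_one
      fun K => by simp [frobenius_norm_transpose]
  have hsum := (hK.mul (hA.mul ((LipBoundOn.const 1).add hKt))).add (hA.mul hKt)
  have hexpand (R P : Matrix ι ι ℝ) :
      (R - 1) * (P * (1 + (R - 1)ᵀ)) + P * (R - 1)ᵀ = R * P * Rᵀ - P := by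
    rw [transpose_sub, transpose_one]
    noncomm_ring
  simp only [hexpand] at hsum
  refine hsum.mono ?_
  have hBs : B * |s| ≤ B := mul_le_of_le_one_right hB hs
  calc 2 * (B * |s|) * (2 * M * (N + B * |s|)) + 2 * M * (B * |s|)
      ≤ 2 * (B * |s|) * (2 * M * (N + B)) + 2 * M * (B * |s|) := by gcongr
    _ = (4 * B * M * (N + B) + 2 * M * B) * |s| := by ring

end Tilt

section Model

open scoped Matrix.Norms.Frobenius

/-- The identification `toM` of `E9` with `3 × 3` matrices, which is isometric for the Frobenius
norm. -/
def toMIso : E9 ≃ₗᵢ[ℝ] Mat3 where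
  toFun := toM
  invFun A := WithLp.toLp 2 fun p => A p.1 p.2
  map_add' _ _ := rfl
  map_smul' _ _ := rfl
  left_inv _ := rfl
  right_inv _ := rfl
  norm_map' P := by
    refine (sq_eq_sq₀ (norm_nonneg _) (norm_nonneg _)).1 ?_
    rw [EuclideanSpace.norm_sq_eq, Fintype.sum_prod_type, frobenius_norm_sq]
    simp only [Real.norm_eq_abs, sq_abs]
    rfl

lemma toMIso_apply (P : E9) : toMIso P = toM P := rfl

lemma toM_toMIso_symm (A : Mat3) : toM (toMIso.symm A) = A := toMIso.apply_symm_apply A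

lemma toMIso_symm_apply (A : Mat3) (i j : Fin 3) : toMIso.symm A (i, j) = A i j := rfl

lemma unitVec_iff {n : Fin 3 → ℝ} : unitVec n ↔ n ⬝ᵥ n = 1 := by
  simp only [unitVec, dotProduct, sq]

/-- `Sym0E` as a linear subspace. -/
def sym0Submodule : Submodule ℝ E9 where
  carrier := Sym0E
  zero_mem' := ⟨transpose_zero, trace_zero _ _⟩
  add_mem' {P P'} hP hP' := by
    have hadd : toM (P + P') = toM P + toM P' := rfl
    exact ⟨by rw [hadd]; exact hP.1.add hP'.1, by rw [hadd, trace_add, hP.2, hP'.2, add_zero]⟩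
  smul_mem' c P hP := by
    have hsmul : toM (c • P) = c • toM P := rfl
    exact ⟨by rw [hsmul]; exact hP.1.smul c, by rw [hsmul, trace_smul, hP.2, smul_zero]⟩

lemma isPreconnected_ball_inter_sym0E (Q : E9) (r : ℝ) : IsPreconnected (ball Q r ∩ Sym0E) :=
  ((convex_ball Q r).inter sym0Submodule.convex).isPreconnected

section Conjugation

variable {P R : Mat3} {lam : ℝ} {n : Fin 3 → ℝ}

lemma SimpleMaxEigen.conj (h : SimpleMaxEigen P lam n) (hR : R ∈ orthogonalGroup (Fin 3) ℝ) :
    SimpleMaxEigen (R * P * Rᵀ) lam (R *ᵥ n) := by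
  have hRRt : R * Rᵀ = 1 := (mem_orthogonalGroup_iff _ _).1 hR
  have hRtR : Rᵀ * R = 1 := (mem_orthogonalGroup_iff' _ _).1 hR
  have hpull (μ : ℝ) (v : Fin 3 → ℝ) (hv : IsEigen (R * P * Rᵀ) μ v) : IsEigen P μ (Rᵀ *ᵥ v) := by
    rw [IsEigen, ← mulVec_smul, ← hv, mulVec_mulVec, mulVec_mulVec, mul_assoc R, ← mul_assoc Rᵀ,
      hRtR, one_mul]
  have hcancel (v : Fin 3 → ℝ) : R *ᵥ (Rᵀ *ᵥ v) = v := by rw [mulVec_mulVec, hRRt, one_mulVec]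
  refine ⟨⟨?_, ?_, fun μ v hv heig => ?_⟩, fun v hv => ?_⟩
  · rw [unitVec_iff, dotProduct_mulVec, vecMul_mulVec, ← dotProduct_mulVec, hRtR, one_mulVec]
    exact unitVec_iff.1 h.1.1
  · rw [IsEigen, mulVec_mulVec, mul_assoc, hRtR, mul_one, ← mulVec_mulVec, h.1.2.1, mulVec_smul]
  · refine h.1.2.2 μ (Rᵀ *ᵥ v) (fun hzero => hv ?_) (hpull μ v heig)
    rw [← hcancel v, hzero, mulVec_zero]
  · obtain ⟨t, ht⟩ := h.2 _ (hpull lam v hv)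
    exact ⟨t, by rw [← hcancel v, ht, mulVec_smul]⟩

lemma SimpleMaxEigen.ne_zero (h : SimpleMaxEigen P lam n) : P ≠ 0 := by
  rintro rfl
  have heig (v : Fin 3 → ℝ) : IsEigen 0 lam v := by
    have hlam : lam • n = 0 := by rw [← h.1.2.1, zero_mulVec]
    have hn : n ≠ 0 := by rintro rfl; simpa using unitVec_iff.1 h.1.1
    rw [IsEigen, zero_mulVec, (smul_eq_zero.1 hlam).resolve_right hn, zero_smul]
  obtain ⟨t₀, ht₀⟩ := h.2 _ (heig (Pi.single 0 1))
  obtain ⟨t₁, ht₁⟩ := h.2 _ (heig (Pi.single 1 1))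
  have h00 := congrFun ht₀ 0
  have h01 := congrFun ht₀ 1
  have h10 := congrFun ht₁ 0
  have h11 := congrFun ht₁ 1
  simp only [Pi.single_eq_same, Pi.single_apply, Pi.smul_apply, smul_eq_mul, one_ne_zero,
    zero_ne_one, if_false] at h00 h01 h10 h11
  grind

lemma SimpleMaxEigen.eq_smul_of_maxEigen (h : SimpleMaxEigen P lam n) {lam' : ℝ}
    {n' : Fin 3 → ℝ} (h' : MaxEigen P lam' n') : ∃ t : ℝ, t ^ 2 = 1 ∧ n' = t • n := by
  have hne {v : Fin 3 → ℝ} (hv : unitVec v) : v ≠ 0 := by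
    rintro rfl; simpa using unitVec_iff.1 hv
  have hlam : lam' = lam := le_antisymm (h.1.2.2 _ _ (hne h'.1) h'.2.1)
    (h'.2.2 _ _ (hne h.1.1) h.1.2.1)
  obtain ⟨t, rfl⟩ := h.2 n' (hlam ▸ h'.2.1)
  have ht := unitVec_iff.1 h'.1
  rw [smul_dotProduct, dotProduct_smul, unitVec_iff.1 h.1.1] at ht
  exact ⟨t, by simpa [sq] using ht, rfl⟩

lemma toMIso_symm_conj_mem_sym0E {P : E9} (hP : P ∈ Sym0E)
    (hR : R ∈ orthogonalGroup (Fin 3) ℝ) : toMIso.symm (R * toM P * Rᵀ) ∈ Sym0E := by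
  constructor <;> rw [toM_toMIso_symm]
  · rw [IsSymm, transpose_mul, transpose_mul, transpose_transpose, hP.1.eq, mul_assoc]
  · rw [trace_mul_cycle, (mem_orthogonalGroup_iff' _ _).1 hR, one_mul, hP.2]

end Conjugation

end Model

section ParametrizationOfT

open scoped Matrix.Norms.Frobenius

/-- The rotation through the angle `θ` about the vertical axis. -/
def verticalRotation (θ : ℝ) : Mat3 :=
  !![Real.cos θ, -Real.sin θ, 0; Real.sin θ, Real.cos θ, 0; 0, 0, 1]

/-- The traceless symmetric matrices with first coordinate vector as an eigenvector. -/
def blockMatrix (a b c : ℝ) : Mat3 := !![a, 0, 0; 0, b, c; 0, c, -(a + b)]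

/-- Parametrization of a superset of `𝒯`: a matrix in `𝒯` is determined by the angle `x 0` of its
horizontal eigenvector and by its entries `x 1`, `x 2`, `x 3` in the rotated frame. -/
def tParam (x : Fin 4 → ℝ) : E9 :=
  toMIso.symm
    (verticalRotation (x 0) * blockMatrix (x 1) (x 2) (x 3) * (verticalRotation (x 0))ᵀ)

lemma verticalRotation_mem_orthogonalGroup (θ : ℝ) :
    verticalRotation θ ∈ orthogonalGroup (Fin 3) ℝ := by
  have hcos_sq := Real.sin_sq_add_cos_sq θ
  rw [mem_orthogonalGroup_iff]
  ext i j
  fin_cases i <;> fin_cases j <;> simp [verticalRotation, mul_apply, Fin.sum_univ_three] <;> grind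

lemma contDiff_tParam : ContDiff ℝ 1 tParam := by
  have hrot (i j : Fin 3) : ContDiff ℝ 1 fun x : Fin 4 → ℝ => verticalRotation (x 0) i j := by
    fin_cases i <;> fin_cases j <;>
      simp only [verticalRotation, of_apply, Fin.isValue, Fin.zero_eta, Fin.mk_one,
        Fin.reduceFinMk, cons_val', cons_val_fin_one, cons_val] <;>
      fun_prop
  have hblock (i j : Fin 3) :
      ContDiff ℝ 1 fun x : Fin 4 → ℝ => blockMatrix (x 1) (x 2) (x 3) i j := by
    fin_cases i <;> fin_cases j <;>
      simp only [blockMatrix, of_apply, Fin.isValue, Fin.zero_eta, Fin.mk_one,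
        Fin.reduceFinMk, cons_val', cons_val_fin_one, cons_val] <;>
      fun_prop
  rw [contDiff_euclidean]
  rintro ⟨i, j⟩
  simp only [tParam, toMIso_symm_apply, mul_apply, transpose_apply]
  fun_prop

lemma exists_tParam_add_smul (x : Fin 4 → ℝ) :
    ∃ w ≠ 0, ∀ t : ℝ, tParam (x + t • Pi.single 1 1) = tParam x + t • w := by
  set R := verticalRotation (x 0)
  refine ⟨toMIso.symm (R * blockMatrix 1 0 0 * Rᵀ), fun hzero => ?_, fun t => ?_⟩
  · have hentry := congrFun (congrFun ((map_eq_zero_iff _ toMIso.symm.injective).1 hzero) 2) 2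
    simp [R, verticalRotation, blockMatrix, mul_apply, Fin.sum_univ_three] at hentry
  · have hblock : blockMatrix (x 1 + t) (x 2) (x 3) =
        blockMatrix (x 1) (x 2) (x 3) + t • blockMatrix 1 0 0 := by
      ext i j
      fin_cases i <;> fin_cases j <;> simp [blockMatrix]
      ring
    simp [tParam, hblock, mul_add, add_mul, R]

lemma exists_abs_le_cos_sin {a b : ℝ} (h : a ^ 2 + b ^ 2 = 1) :
    ∃ θ : ℝ, |θ| ≤ 4 ∧ Real.cos θ = a ∧ Real.sin θ = b := by
  have hnorm : ‖(⟨a, b⟩ : ℂ)‖ = 1 := by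
    rw [Complex.norm_eq_sqrt_sq_add_sq, h, Real.sqrt_one]
  refine ⟨Complex.arg ⟨a, b⟩, (Complex.abs_arg_le_pi _).trans Real.pi_le_four, ?_, ?_⟩
  · simpa [hnorm] using Complex.norm_mul_cos_arg ⟨a, b⟩
  · simpa [hnorm] using Complex.norm_mul_sin_arg ⟨a, b⟩

lemma eq_blockMatrix {B : Mat3} (hsymm : B.IsSymm) (htrace : B.trace = 0) {lam : ℝ}
    (heig : B *ᵥ Pi.single 0 1 = lam • Pi.single 0 1) :
    B = blockMatrix (B 0 0) (B 1 1) (B 1 2) := by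
  have h10 : B 1 0 = 0 := by simpa using congrFun heig 1
  have h20 : B 2 0 = 0 := by simpa using congrFun heig 2
  have h22 : B 2 2 = -(B 0 0 + B 1 1) := by
    rw [trace_fin_three] at htrace
    linarith
  have h01 : B 0 1 = 0 := (hsymm.apply 1 0).trans h10
  have h02 : B 0 2 = 0 := (hsymm.apply 2 0).trans h20
  ext i j
  fin_cases i <;> fin_cases j <;>
    simp [blockMatrix, h10, h20, h22, h01, h02, hsymm.apply 1 2]

lemma frobenius_norm_sq_of_mem_orthogonalGroup {ι : Type*} [Fintype ι] [DecidableEq ι]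
    {R : Matrix ι ι ℝ} (hR : R ∈ orthogonalGroup ι ℝ) : ‖R‖ ^ 2 = Fintype.card ι := by
  rw [← trace_one (R := ℝ), ← (mem_orthogonalGroup_iff _ _).1 hR, frobenius_norm_sq]
  simp only [trace, diag_apply, mul_apply, transpose_apply, sq]

lemma abs_conj_apply_le {R : Mat3} (hR : R ∈ orthogonalGroup (Fin 3) ℝ) (A : Mat3)
    (i j : Fin 3) : |(Rᵀ * A * R) i j| ≤ 3 * ‖A‖ := by
  set B := Rᵀ * A * R
  calc |B i j| ≤ ‖toMIso.symm B‖ := PiLp.norm_apply_le (toMIso.symm B) (i, j)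
    _ = ‖B‖ := toMIso.symm.norm_map B
    _ ≤ ‖Rᵀ‖ * ‖A‖ * ‖R‖ := norm_mul_le_of_le (norm_mul_le _ _) le_rfl
    _ = ‖R‖ ^ 2 * ‖A‖ := by rw [frobenius_norm_transpose]; ring
    _ = 3 * ‖A‖ := by simp [frobenius_norm_sq_of_mem_orthogonalGroup hR]

lemma exists_tParam_eq {A : E9} (hA : A ∈ TsetE) :
    ∃ x ∈ closedBall (0 : Fin 4 → ℝ) (3 * ‖A‖ + 4), tParam x = A := by
  obtain ⟨hA0, -, lam, n, hsimple, hn2⟩ := hA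
  obtain ⟨θ, hθ, hcos, hsin⟩ : ∃ θ : ℝ, |θ| ≤ 4 ∧ Real.cos θ = n 0 ∧ Real.sin θ = n 1 :=
    exists_abs_le_cos_sin (by simpa [unitVec, Fin.sum_univ_three, hn2] using hsimple.1.1)
  set R := verticalRotation θ with hRdef
  have hR : R ∈ orthogonalGroup (Fin 3) ℝ := verticalRotation_mem_orthogonalGroup θ
  have hRRt := (mem_orthogonalGroup_iff _ _).1 hR
  have hRtR := (mem_orthogonalGroup_iff' _ _).1 hR
  have hRn : R *ᵥ Pi.single 0 1 = n := by
    ext i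
    fin_cases i <;> simp [hRdef, verticalRotation, hcos, hsin, hn2]
  set B : Mat3 := Rᵀ * toM A * R with hB
  have hBmem : toMIso.symm B ∈ Sym0E := by
    simpa using toMIso_symm_conj_mem_sym0E hA0 (R := Rᵀ)
      ((mem_orthogonalGroup_iff _ _).2 (by simpa))
  have hBeig : B *ᵥ Pi.single 0 1 = lam • Pi.single 0 1 := by
    rw [hB, ← mulVec_mulVec, hRn, ← mulVec_mulVec, hsimple.1.2.1, mulVec_smul, ← hRn,
      mulVec_mulVec, hRtR, one_mulVec]
  have hblock : B = blockMatrix (B 0 0) (B 1 1) (B 1 2) := eq_blockMatrix hBmem.1 hBmem.2 hBeig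
  have hentry (i j : Fin 3) : |B i j| ≤ 3 * ‖A‖ :=
    (abs_conj_apply_le hR (toM A) i j).trans_eq <| by
      rw [← toMIso_apply, toMIso.norm_map]
  refine ⟨![θ, B 0 0, B 1 1, B 1 2], ?_, toMIso.symm_apply_eq.2 ?_⟩
  · rw [mem_closedBall_zero_iff, pi_norm_le_iff_of_nonneg (by positivity)]
    have hnorm := norm_nonneg A
    intro i
    fin_cases i
    · exact hθ.trans (by linarith)
    all_goals exact (hentry _ _).trans (by linarith)
  · change R * blockMatrix (B 0 0) (B 1 1) (B 1 2) * Rᵀ = toM A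
    rw [← hblock, hB, mul_assoc Rᵀ, ← mul_assoc R, hRRt, one_mul, mul_assoc, hRRt, mul_one]

lemma exists_hausdorffMeasure_inter_tsetE_le (Q : E9) (R : ℝ) :
    ∃ C : NNReal, ∃ K : Set (Fin 4 → ℝ), IsCompact K ∧ ∀ S ⊆ closedBall Q R,
      μH[4] (S ∩ TsetE) ≤ C * volume (K ∩ tParam ⁻¹' S) := by
  set K := closedBall (0 : Fin 4 → ℝ) (3 * (‖Q‖ + R) + 4)
  have hK : IsCompact K := isCompact_closedBall _ _
  obtain ⟨C, hC⟩ := exists_hausdorffMeasure_image_le contDiff_tParam hK (convex_closedBall _ _)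
  refine ⟨C, K, hK, fun S hS => ?_⟩
  have hsub : S ∩ TsetE ⊆ tParam '' (K ∩ tParam ⁻¹' S) := by
    rintro A ⟨hAS, hAT⟩
    obtain ⟨x, hx, rfl⟩ := exists_tParam_eq hAT
    have hnorm : ‖tParam x‖ ≤ ‖Q‖ + R := norm_le_norm_add_const_of_dist_le (hS hAS)
    exact ⟨x, ⟨closedBall_subset_closedBall (by gcongr) hx, hAS⟩, rfl⟩
  simpa using (measure_mono hsub).trans (hC _ inter_subset_left)

lemma hausdorffMeasure_ball_inter_tsetE_ne_top (Q : E9) (R : ℝ) :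
    μH[4] (ball Q R ∩ TsetE) ≠ ∞ := by
  obtain ⟨C, K, hK, hle⟩ := exists_hausdorffMeasure_inter_tsetE_le Q R
  refine ne_top_of_le_ne_top ?_ (hle _ ball_subset_closedBall)
  exact ENNReal.mul_ne_top ENNReal.coe_ne_top
    (measure_ne_top_of_subset inter_subset_left hK.measure_ne_top)

lemma hausdorffMeasure_sphere_inter_tsetE (Q : E9) (r : ℝ) :
    μH[4] (sphere Q r ∩ TsetE) = 0 := by
  obtain ⟨C, K, -, hle⟩ := exists_hausdorffMeasure_inter_tsetE_le Q r
  have hnull := volume_preimage_sphere_eq_zero contDiff_tParam.continuous (Pi.single 1 1)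
    exists_tParam_add_smul Q r
  refine le_antisymm ((hle _ sphere_subset_closedBall).trans ?_) bot_le
  rw [measure_mono_null inter_subset_right hnull, mul_zero]

end ParametrizationOfT

section DirectorFields

open scoped Matrix.Norms.Frobenius

/-- The vertical unit vector `e₃`; Lean's coordinates start at `0`. -/
def verticalVec : Fin 3 → ℝ := Pi.single 2 1

lemma verticalVec_dotProduct (v : Fin 3 → ℝ) : verticalVec ⬝ᵥ v = v 2 :=
  single_one_dotProduct 2 v

lemma verticalVec_two : verticalVec 2 = 1 := Pi.single_eq_same 2 1

lemma norm_verticalVec : ‖verticalVec‖ = 1 := by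
  rw [verticalVec, Pi.norm_single, norm_one]

/-- The unit vector in the horizontal direction of a unit vector `n` of height `n 2 = s`, where
`|s| < 1`. -/
def horizontalDir (s : ℝ) (n : Fin 3 → ℝ) : Fin 3 → ℝ :=
  (√(1 - s ^ 2))⁻¹ • (n - s • verticalVec)

/-- The rotation that tilts the horizontal direction `h` upwards through the angle `arcsin s`,
acting on the matrix `P` by conjugation. -/
def tilt (h : Fin 3 → ℝ) (s : ℝ) (P : E9) : E9 :=
  toMIso.symm (tiltMatrix verticalVec h s * toM P * (tiltMatrix verticalVec h s)ᵀ)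

section HorizontalDir

variable {s : ℝ} {n : Fin 3 → ℝ}

lemma horizontalDir_two (hns : n 2 = s) : horizontalDir s n 2 = 0 := by
  simp [horizontalDir, verticalVec_two, hns]

lemma sqrt_one_sub_sq_pos (hs : |s| < 1) : 0 < √(1 - s ^ 2) :=
  Real.sqrt_pos.2 (sub_pos.2 ((sq_lt_one_iff_abs_lt_one s).2 hs))

lemma sqrt_smul_horizontalDir_add (hs : |s| < 1) :
    √(1 - s ^ 2) • horizontalDir s n + s • verticalVec = n := by
  rw [horizontalDir, smul_inv_smul₀ (sqrt_one_sub_sq_pos hs).ne', sub_add_cancel]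

lemma unitVec_horizontalDir (hs : |s| < 1) (hn : unitVec n) (hns : n 2 = s) :
    unitVec (horizontalDir s n) := by
  have hpos := sqrt_one_sub_sq_pos hs
  have hsq : √(1 - s ^ 2) ^ 2 = 1 - s ^ 2 := Real.sq_sqrt (Real.sqrt_pos.1 hpos).le
  have hexpand : (n - s • verticalVec) ⬝ᵥ (n - s • verticalVec) = 1 - s ^ 2 := by
    simp only [sub_dotProduct, dotProduct_sub, smul_dotProduct, dotProduct_smul, smul_eq_mul,
      dotProduct_comm n, verticalVec_dotProduct, verticalVec_two, unitVec_iff.1 hn, hns]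
    ring
  rw [unitVec_iff, horizontalDir, smul_dotProduct, dotProduct_smul, smul_smul, hexpand,
    ← mul_inv, ← sq, hsq, smul_eq_mul, inv_mul_cancel₀ (Real.sqrt_pos.1 hpos).ne']

end HorizontalDir

section Tilting

variable {h n : Fin 3 → ℝ} {s lam : ℝ} {P : E9}

lemma verticalTilt_mem_orthogonalGroup (hh : unitVec h) (h2 : h 2 = 0) (hs : |s| ≤ 1) :
    tiltMatrix verticalVec h s ∈ orthogonalGroup (Fin 3) ℝ :=
  tiltMatrix_mem_orthogonalGroup ((verticalVec_dotProduct _).trans verticalVec_two)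
    (unitVec_iff.1 hh) ((verticalVec_dotProduct h).trans h2) hs

lemma verticalTilt_mulVec (hh : unitVec h) (h2 : h 2 = 0) (s a b : ℝ) :
    tiltMatrix verticalVec h s *ᵥ (a • h + b • verticalVec) =
      (√(1 - s ^ 2) * a - s * b) • h + (s * a + √(1 - s ^ 2) * b) • verticalVec :=
  tiltMatrix_mulVec ((verticalVec_dotProduct _).trans verticalVec_two)
    (unitVec_iff.1 hh) ((verticalVec_dotProduct h).trans h2) s a b

lemma tilt_mem_sym0E (hh : unitVec h) (h2 : h 2 = 0) (hs : |s| ≤ 1) (hP : P ∈ Sym0E) :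
    tilt h s P ∈ Sym0E :=
  toMIso_symm_conj_mem_sym0E hP (verticalTilt_mem_orthogonalGroup hh h2 hs)

lemma SimpleMaxEigen.toM_tilt (hP : SimpleMaxEigen (toM P) lam n) (hh : unitVec h) (h2 : h 2 = 0)
    (hs : |s| ≤ 1) :
    SimpleMaxEigen (toM (tilt h s P)) lam (tiltMatrix verticalVec h s *ᵥ n) := by
  rw [tilt, toM_toMIso_symm]
  exact hP.conj (verticalTilt_mem_orthogonalGroup hh h2 hs)

lemma mem_tsetE_of_simpleMaxEigen (hP : P ∈ Sym0E) (hn : SimpleMaxEigen (toM P) lam n)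
    (hn2 : n 2 = 0) : P ∈ TsetE := by
  refine ⟨hP, ?_, lam, n, hn, hn2⟩
  rintro rfl
  exact hn.ne_zero rfl

lemma tilt_horizontalDir_mem_tsetE (hP : P ∈ Sym0E) (hn : SimpleMaxEigen (toM P) lam n)
    (hns : n 2 = s) (hs : |s| < 1) : tilt (horizontalDir s n) (-s) P ∈ TsetE := by
  have hh := unitVec_horizontalDir hs hn.1.1 hns
  have h2 := horizontalDir_two hns
  have hs' : |-s| ≤ 1 := by rw [abs_neg]; exact hs.le
  have hrot : tiltMatrix verticalVec (horizontalDir s n) (-s) *ᵥ n = horizontalDir s n := by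
    have hsq := Real.mul_self_sqrt (Real.sqrt_pos.1 (sqrt_one_sub_sq_pos hs)).le
    have hrot := verticalTilt_mulVec hh h2 (-s) √(1 - s ^ 2) s
    rw [sqrt_smul_horizontalDir_add hs, neg_sq, hsq] at hrot
    rw [hrot]
    module
  have htilt := hn.toM_tilt hh h2 hs'
  rw [hrot] at htilt
  exact mem_tsetE_of_simpleMaxEigen (tilt_mem_sym0E hh h2 hs' hP) htilt h2

lemma exists_lipBoundOn_tilt_sub {L : ℝ} (hL : 0 ≤ L) (Q : E9) (r : ℝ) :
    ∃ C ≥ 0, ∀ {S : Set E9} {h : E9 → Fin 3 → ℝ} {s : ℝ}, S ⊆ ball Q r → LipBoundOn h S L →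
      |s| ≤ 1 → LipBoundOn (fun P => tilt (h P) s P - P) S (C * |s|) := by
  obtain ⟨C, hC, hbound⟩ := exists_lipBoundOn_tiltMatrix_conj_sub (X := E9)
    (M := max 1 (‖Q‖ + r)) verticalVec (zero_le_one.trans (le_max_left _ _)) hL
  refine ⟨C, hC, fun {S h s} hS hh hs => ?_⟩
  have hid : LipBoundOn (fun P : E9 => P) S (max 1 (‖Q‖ + r)) :=
    { norm_le := fun P hP =>
        (norm_le_norm_add_const_of_dist_le (mem_ball.1 (hS hP)).le).trans (le_max_right _ _)
      norm_sub_le_mul_dist := fun P _ P' _ => by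
        rw [← dist_eq_norm]
        exact le_mul_of_one_le_left dist_nonneg (le_max_left _ _) }
  have hconj := (hbound (hid.isometry_comp toMIso.toLinearIsometry) hh hs).isometry_comp
    toMIso.symm.toLinearIsometry
  have hinv (P : E9) : toMIso.symm (toM P) = P := toMIso.symm_apply_apply P
  simpa [tilt, toMIso_apply, hinv] using hconj

end Tilting

/-- A field of unit eigenvectors for simple largest eigenvalues over `U` that has `C^{0,1}`-size at
most `L` and whose values form pairwise acute angles. -/
structure IsDirectorField (n : E9 → Fin 3 → ℝ) (U : Set E9) (L : ℝ) : Prop where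
  simpleMaxEigen : ∀ P ∈ U, ∃ lam, SimpleMaxEigen (toM P) lam (n P)
  dotProduct_pos : ∀ P ∈ U, ∀ P' ∈ U, 0 < n P ⬝ᵥ n P'
  lipBoundOn : LipBoundOn n U L

namespace IsDirectorField

variable {n : E9 → Fin 3 → ℝ} {U : Set E9} {L s : ℝ} {P : E9}

lemma apply_two_eq_zero (hn : IsDirectorField n U L) (hP : P ∈ U) (hT : P ∈ TsetE) :
    n P 2 = 0 := by
  obtain ⟨lam, hlam⟩ := hn.simpleMaxEigen P hP
  obtain ⟨-, -, lam', n', hn', hn'2⟩ := hT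
  obtain ⟨t, -, ht⟩ := hn'.eq_smul_of_maxEigen hlam.1
  rw [ht, Pi.smul_apply, hn'2, smul_zero]

lemma apply_tilt_two (hn : IsDirectorField n U L) (hP : P ∈ U) (hT : P ∈ TsetE) (hs : |s| < 1)
    (hmem : tilt (n P) s P ∈ U) : n (tilt (n P) s P) 2 = s := by
  have hP2 := hn.apply_two_eq_zero hP hT
  obtain ⟨lam, hlam⟩ := hn.simpleMaxEigen P hP
  obtain ⟨lam', hlam'⟩ := hn.simpleMaxEigen _ hmem
  have hunit := hlam.1.1
  obtain ⟨t, ht_sq, ht⟩ := (hlam.toM_tilt hunit hP2 hs.le).eq_smul_of_maxEigen hlam'.1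
  have hrot : tiltMatrix verticalVec (n P) s *ᵥ n P =
      √(1 - s ^ 2) • n P + s • verticalVec := by
    simpa using verticalTilt_mulVec hunit hP2 s 1 0
  have hcos : n P ⬝ᵥ n (tilt (n P) s P) = t * √(1 - s ^ 2) := by
    rw [ht, hrot, dotProduct_smul, dotProduct_add, dotProduct_smul, dotProduct_smul,
      unitVec_iff.1 hunit, dotProduct_comm (n P), verticalVec_dotProduct, hP2]
    simp
  have ht_pos : 0 < t :=
    pos_of_mul_pos_left (hcos ▸ hn.dotProduct_pos P hP _ hmem) (Real.sqrt_nonneg _)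
  have ht_one : t = 1 := (sq_eq_one_iff.1 ht_sq).resolve_right (by linarith)
  simp [ht, ht_one, hrot, hP2, verticalVec_two]

lemma lipBoundOn_horizontalDir (hn : IsDirectorField n U L) (hL : 0 ≤ L) (hs : |s| ≤ 1 / 2) :
    LipBoundOn (fun P => horizontalDir s (n P)) U (2 * (L + 1)) := by
  have hcos : 1 / 2 ≤ √(1 - s ^ 2) := by
    linarith [one_sub_sqrt_one_sub_sq_le (hs.trans one_half_lt_one.le)]
  have hinv : |(√(1 - s ^ 2))⁻¹| ≤ 2 := by
    rw [abs_of_nonneg (by positivity)]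
    exact inv_le_of_inv_le₀ two_pos (by simpa using hcos)
  have hheight : ‖-(s • verticalVec)‖ ≤ 1 := by
    rw [norm_neg, norm_smul, norm_verticalVec, mul_one, Real.norm_eq_abs]
    linarith
  have hlip := (hn.lipBoundOn.add (LipBoundOn.const (-(s • verticalVec)))).const_smul
    (√(1 - s ^ 2))⁻¹
  simp only [← sub_eq_add_neg] at hlip
  exact hlip.mono (by gcongr)

lemma tendsto_hausdorffMeasure_levelSet {Q : E9} {α : ℝ}
    (hn : IsDirectorField n (ball Q α ∩ Sym0E) L) (hL : 0 ≤ L) :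
    Tendsto (fun s => μH[4] {P ∈ ball Q α ∩ Sym0E | n P 2 = s}) (𝓝 0)
      (𝓝 (μH[4] (ball Q α ∩ TsetE))) := by
  obtain ⟨C, hC, htilt⟩ := exists_lipBoundOn_tilt_sub (L := 2 * (L + 1)) (by positivity) Q α
  have hsmall : ∀ᶠ s : ℝ in 𝓝 0, |s| ≤ 1 / 2 :=
    (continuous_abs.tendsto' 0 0 abs_zero).eventually_le_const one_half_pos
  refine tendsto_hausdorffMeasure_of_lipBoundOn (ε := fun s => C * |s|) (by norm_num)
    (Continuous.tendsto' (by fun_prop) _ _ (by simp)) (lt_add_one α)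
    (hausdorffMeasure_ball_inter_tsetE_ne_top _ _) (hausdorffMeasure_sphere_inter_tsetE _ _) ?_ ?_
  · filter_upwards [hsmall] with s hs
    set S := {P ∈ ball Q α ∩ Sym0E | n P 2 = s}
    have hSU : S ⊆ ball Q α ∩ Sym0E := sep_subset _ _
    have hSball : S ⊆ ball Q α := hSU.trans inter_subset_left
    have hf : LipBoundOn (fun P => tilt (horizontalDir s (n P)) (-s) P - P) S (C * |s|) := by
      simpa using htilt (s := -s) hSball ((hn.lipBoundOn_horizontalDir hL hs).mono_set hSU)
        (by rw [abs_neg]; linarith)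
    refine ⟨_, hf, (hf.mapsTo_ball hSball).inter fun P hP => ?_⟩
    obtain ⟨lam, hlam⟩ := hn.simpleMaxEigen P hP.1
    exact tilt_horizontalDir_mem_tsetE hP.1.2 hlam hP.2 (by linarith)
  · filter_upwards [hsmall] with s hs
    set S := ball Q (α - C * |s|) ∩ TsetE
    have hSU : S ⊆ ball Q α ∩ Sym0E := inter_subset_inter
      (ball_subset_ball (sub_le_self α (by positivity))) fun _ hP => hP.1
    have hf : LipBoundOn (fun P => tilt (n P) s P - P) S (C * |s|) :=
      htilt (hSU.trans inter_subset_left)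
        ((hn.lipBoundOn.mono_set hSU).mono (by linarith)) (by linarith)
    refine ⟨_, hf, fun P hP => ?_⟩
    obtain ⟨lam, hlam⟩ := hn.simpleMaxEigen P (hSU hP)
    have hball : tilt (n P) s P ∈ ball Q α := by
      simpa using hf.mapsTo_ball inter_subset_left hP
    have hmem : tilt (n P) s P ∈ ball Q α ∩ Sym0E := ⟨hball, tilt_mem_sym0E hlam.1.1
      (hn.apply_two_eq_zero (hSU hP) hP.2) (by linarith) hP.2.1⟩
    exact ⟨hmem, hn.apply_tilt_two (hSU hP) hP.2 (by linarith) hmem⟩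

end IsDirectorField

section NearUniaxial

variable {sS α : ℝ} {Q N : E9} {nsel : E9 → Fin 3 → ℝ}

lemma hasSpectralGap_of_dist_nsetE_le {P : E9} {lam : ℝ} {n : Fin 3 → ℝ} (hs : 0 ≤ sS)
    (hN : N ∈ NsetE sS) (hP : P ∈ Sym0E) (hdist : dist P N ≤ sS / 8)
    (hn : MaxEigen (toM P) lam n) : HasSpectralGap (toM P) lam n (sS / 2) := by
  obtain ⟨m, hm, hNm⟩ := hN
  have huniax : toM N = sS • vecMulVec m m + (-(sS / 3)) • (1 : Mat3) := by
    rw [hNm, uniax]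
    module
  have hnorm : ‖toM P - (sS • vecMulVec m m + (-(sS / 3)) • (1 : Mat3))‖ ≤ sS / 8 := by
    rwa [← huniax, ← toMIso_apply, ← toMIso_apply, ← dist_eq_norm, toMIso.dist_map]
  have hgap := hasSpectralGap_of_norm_sub_le hs (unitVec_iff.1 hm) (unitVec_iff.1 hn.1) hnorm
    hn.2.1 (dotProduct_mulVec_self_le_of_eigenvalue_le hP.1 hn.2.2)
  rwa [show sS - 4 * (sS / 8) = sS / 2 by ring] at hgap

lemma isDirectorField_of_dist_nsetE_le (hs : 0 < sS) (hN : N ∈ NsetE sS)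
    (hdist : ∀ P ∈ ball Q α, dist P N ≤ sS / 8)
    (hcont : ContinuousOn nsel (ball Q α ∩ Sym0E))
    (hsel : ∀ P ∈ ball Q α ∩ Sym0E, ∃ lam, MaxEigen (toM P) lam (nsel P)) :
    IsDirectorField nsel (ball Q α ∩ Sym0E) (1 + 2 / (sS / 2)) := by
  have hmax : ∀ P ∈ ball Q α ∩ Sym0E, ∃ lam, MaxEigen (toM P) lam (nsel P) ∧
      HasSpectralGap (toM P) lam (nsel P) (sS / 2) := fun P hP =>
    (hsel P hP).imp fun lam hlam =>
      ⟨hlam, hasSpectralGap_of_dist_nsetE_le hs.le hN hP.2 (hdist P hP.1) hlam⟩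
  have hgap : ∀ P ∈ ball Q α ∩ Sym0E, ∃ lam, HasSpectralGap (toM P) lam (nsel P) (sS / 2) :=
    fun P hP => (hmax P hP).imp fun _ h => h.2
  have hiso : LipschitzWith 1 toM := toMIso.lipschitz
  have hdiam : ∀ P ∈ ball Q α ∩ Sym0E, ∀ P' ∈ ball Q α ∩ Sym0E, dist P P' < sS / 2 :=
    fun P hP P' hP' => by
      linarith [dist_triangle_right P P' N, hdist P hP.1, hdist P' hP'.1]
  have hpos : ∀ P ∈ ball Q α ∩ Sym0E, ∀ P' ∈ ball Q α ∩ Sym0E, 0 < nsel P ⬝ᵥ nsel P' :=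
    fun P hP P' hP' => dotProduct_pos_of_continuousOn_selection hiso (half_pos hs)
      (isPreconnected_ball_inter_sym0E Q α) hcont hgap hdiam hP hP'
  refine ⟨fun P hP => ?_, hpos, lipBoundOn_selection hiso (half_pos hs) hgap hpos⟩
  obtain ⟨lam, hlam, hgapP⟩ := hmax P hP
  exact ⟨lam, hlam, fun v hv => ⟨_, hgapP.eq_smul_of_eigen (half_pos hs) hv⟩⟩

lemma nonempty_nsetE (s : ℝ) : (NsetE s).Nonempty :=
  ⟨toMIso.symm (uniax s (Pi.single 0 1)), Pi.single 0 1, by simp [unitVec_iff],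
    toM_toMIso_symm _⟩

lemma hausdorffMeasure_reflected_levelSet (hQ : Q ∈ Sym0E) (d s : ℝ) :
    μH[d] {Y : E9 | Y ∈ Sym0E ∧ Y ∈ ball (0 : E9) α ∧ nsel (Q - Y) 2 = s} =
      μH[d] {P ∈ ball Q α ∩ Sym0E | nsel P 2 = s} := by
  rw [← (IsometryEquiv.subLeft Q).hausdorffMeasure_preimage d
    {P ∈ ball Q α ∩ Sym0E | nsel P 2 = s}]
  congr 1
  ext Y
  have hsym : Q - Y ∈ Sym0E ↔ Y ∈ Sym0E := sym0Submodule.sub_mem_iff_right hQ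
  have hball : Q - Y ∈ ball Q α ↔ Y ∈ ball 0 α := by simp
  simp only [mem_preimage, mem_ofPred_eq, mem_inter_iff, IsometryEquiv.subLeft_apply, hsym, hball]
  tauto

end NearUniaxial

end DirectorFields

theorem statement10 (sS : ℝ) (hs : 0 < sS) :
    ∃ α₀ > (0 : ℝ), ∃ α₁ > (0 : ℝ),
      ∀ Q : E9, Q ∈ Sym0E → infDist Q (NsetE sS) ≤ α₀ →
      ∀ α : ℝ, 0 < α → α < α₁ →
      ∀ nsel : E9 → (Fin 3 → ℝ), ContinuousOn nsel (ball Q α ∩ Sym0E) →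
      (∀ P ∈ ball Q α ∩ Sym0E,
        unitVec (nsel P) ∧ ∃ lam : ℝ, MaxEigen (toM P) lam (nsel P)) →
      Tendsto (fun s : ℝ =>
          μH[4] {Y : E9 | Y ∈ Sym0E ∧ Y ∈ ball (0 : E9) α ∧ nsel (Q - Y) 2 = s})
        (nhdsWithin 0 {(0 : ℝ)}ᶜ)
        (nhds (μH[4] (ball Q α ∩ TsetE))) := by
  refine ⟨sS / 32, by positivity, sS / 32, by positivity,
    fun Q hQ hdist α _ hα nsel hcont hsel => ?_⟩
  obtain ⟨N, hN, hQN⟩ : ∃ N ∈ NsetE sS, dist Q N < sS / 16 :=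
    (infDist_lt_iff (nonempty_nsetE sS)).1 (by linarith)
  have hnear : ∀ P ∈ ball Q α, dist P N ≤ sS / 8 := fun P hP => by
    linarith [dist_triangle P Q N, mem_ball.1 hP]
  have hfield := isDirectorField_of_dist_nsetE_le hs hN hnear hcont fun P hP => (hsel P hP).2
  simp only [hausdorffMeasure_reflected_levelSet hQ]
  exact (hfield.tendsto_hausdorffMeasure_levelSet (by positivity)).mono_left nhdsWithin_le_nhds
end
end

section
/- Let s*, c* > 0, let 0 ≤ r₁ < r₂ < ∞, and let n₃ ∈ H¹((r₁,r₂)) take values in [−1,1] with n₃(r₁) = −1 and n₃(r₂) = 1. Then ∫_{r₁}^{r₂} [ s*²·n₃'(r)² / (1 − n₃(r)²) + c*²·(1 − n₃(r)²) ] dr ≥ 4·s*·c*, where the integrand is interpreted as 0 at points where |n₃(r)| = 1 and n₃'(r) = 0 (which holds almost everywhere on the set {|n₃| = 1}) and +∞ where |n₃(r)| = 1 and n₃'(r) ≠ 0. In particular I(r₁, r₂, −1, 1) ≥ 4·s*·c*. -/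
/- STATEMENT 12: Let s*, c* > 0, 0 ≤ r₁ < r₂ < ∞, and n₃ ∈ H¹((r₁,r₂)) with values
in [−1,1], n₃(r₁) = −1, n₃(r₂) = 1. Then
∫_{r₁}^{r₂} [ s*²n₃'²/(1−n₃²) + c*²(1−n₃²) ] dr ≥ 4 s* c*,
the integrand being 0 where |n₃|=1, n₃'=0 and +∞ where |n₃|=1, n₃'≠0.
The H¹ function is represented by its continuous representative together with its
weak derivative g (square-integrable), via the fundamental theorem of calculus. -/

noncomputable section

open MeasureTheory Set
open scoped ENNReal

/-- The (extended-real-valued) integrand s*²d²/(1−n²) + c*²(1−n²), interpreted as +∞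
when |n| = 1 and d ≠ 0 (and as 0 when |n| = 1 and d = 0, since then both terms vanish). -/
def integrand (sS cS : ℝ) (n d : ℝ) : ℝ≥0∞ :=
  if 1 - n ^ 2 = 0 ∧ d ≠ 0 then ⊤
  else ENNReal.ofReal (sS ^ 2 * d ^ 2 / (1 - n ^ 2) + cS ^ 2 * (1 - n ^ 2))

/-!
Young's inequality bounds the integrand pointwise from below by `2 * |s * c * n'|`, in which the
singular weight `1 - n ^ 2` has cancelled; the integral of `|n'|` is at least the total increment
of `n`.
-/

theorem two_mul_abs_mul_le_sq_div_add {𝕜 : Type*} [Field 𝕜] [LinearOrder 𝕜]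
    [IsStrictOrderedRing 𝕜] (s c d : 𝕜) {w : 𝕜} (hw : 0 < w) :
    2 * |s * c * d| ≤ s ^ 2 * d ^ 2 / w + c ^ 2 * w :=
  calc 2 * |s * c * d| = 2 * |c| * |s * d| := by simp only [abs_mul]; ring
    _ ≤ w * |c| ^ 2 + w⁻¹ * |s * d| ^ 2 := two_mul_le_add_mul_sq hw
    _ = s ^ 2 * d ^ 2 / w + c ^ 2 * w := by rw [sq_abs, sq_abs]; ring

theorem ofReal_two_mul_abs_mul_le_integrand (s c d : ℝ) {n : ℝ} (hn : n ∈ Icc (-1 : ℝ) 1) :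
    ENNReal.ofReal (2 * |s * c * d|) ≤ integrand s c n d := by
  have weight_nonneg : 0 ≤ 1 - n ^ 2 := sub_nonneg.2 ((sq_le_one_iff_abs_le_one n).2 (abs_le.2 hn))
  unfold integrand
  split_ifs with hsing
  · exact le_top
  · apply ENNReal.ofReal_le_ofReal
    rcases weight_nonneg.eq_or_lt' with weight_zero | weight_pos
    · have hd : d = 0 := not_not.1 fun hd ↦ hsing ⟨weight_zero, hd⟩
      simp [hd, weight_zero]
    · exact two_mul_abs_mul_le_sq_div_add s c d weight_pos

theorem statement12_general (s c : ℝ) {r₁ r₂ : ℝ} (hr₁₂ : r₁ ≤ r₂) {n g : ℝ → ℝ}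
    (hval : ∀ r ∈ Icc r₁ r₂, n r ∈ Icc (-1 : ℝ) 1)
    (hg : IntegrableOn g (Icc r₁ r₂))
    (hftc : ∀ x ∈ Icc r₁ r₂, n x = n r₁ + ∫ t in r₁..x, g t) :
    ENNReal.ofReal (2 * |s * c * (n r₂ - n r₁)|) ≤
      ∫⁻ r in Ioo r₁ r₂, integrand s c (n r) (g r) := by
  have increment_eq : n r₂ - n r₁ = ∫ r in Ioo r₁ r₂, g r := by
    rw [hftc r₂ (right_mem_Icc.2 hr₁₂), add_sub_cancel_left,
      intervalIntegral.integral_of_le hr₁₂, integral_Ioc_eq_integral_Ioo]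
  have integrable : IntegrableOn (fun r ↦ 2 * |s * c * g r|) (Ioo r₁ r₂) :=
    ((hg.mono_set Ioo_subset_Icc_self).const_mul (s * c)).abs.const_mul 2
  calc ENNReal.ofReal (2 * |s * c * (n r₂ - n r₁)|)
      = ENNReal.ofReal (2 * |∫ r in Ioo r₁ r₂, s * c * g r|) := by
        rw [increment_eq, integral_const_mul]
    _ ≤ ENNReal.ofReal (∫ r in Ioo r₁ r₂, 2 * |s * c * g r|) := by
        rw [integral_const_mul 2]
        gcongr
        exact abs_integral_le_integral_abs
    _ = ∫⁻ r in Ioo r₁ r₂, ENNReal.ofReal (2 * |s * c * g r|) :=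
        ofReal_integral_eq_lintegral_ofReal integrable (.of_forall fun _ ↦ by positivity)
    _ ≤ ∫⁻ r in Ioo r₁ r₂, integrand s c (n r) (g r) :=
        setLIntegral_mono' measurableSet_Ioo fun r hr ↦
          ofReal_two_mul_abs_mul_le_integrand s c (g r) (hval r (Ioo_subset_Icc_self hr))

theorem statement12 (sS cS : ℝ) (hsS : 0 < sS) (hcS : 0 < cS)
    (r₁ r₂ : ℝ) (hr₁ : 0 ≤ r₁) (hr₁₂ : r₁ < r₂)
    (n₃ g : ℝ → ℝ)
    (hval : ∀ r ∈ Icc r₁ r₂, n₃ r ∈ Icc (-1 : ℝ) 1)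
    (hg1 : IntegrableOn g (Icc r₁ r₂))
    (hg2 : IntegrableOn (fun t => (g t) ^ 2) (Icc r₁ r₂))
    (hftc : ∀ x ∈ Icc r₁ r₂, n₃ x = n₃ r₁ + ∫ t in r₁..x, g t)
    (hbdry₁ : n₃ r₁ = -1) (hbdry₂ : n₃ r₂ = 1) :
    ENNReal.ofReal (4 * sS * cS) ≤ ∫⁻ r in Ioo r₁ r₂, integrand sS cS (n₃ r) (g r) := by
  convert statement12_general sS cS hr₁₂.le hval hg1 hftc using 2
  rw [hbdry₁, hbdry₂, abs_of_nonneg (by positivity)]; ring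
end
end

section
/- Let s*, c* > 0 and θ ∈ [0, π]. Let n₃ : [0,∞) → [−1,1] be locally in H¹ with n₃(0) = cos θ and n₃(r) → 1 as r → ∞. Then ∫₀^∞ [ s*²·n₃'(r)² / (1 − n₃(r)²) + c*²·(1 − n₃(r)²) ] dr ≥ 2·s*·c*·(1 − cos θ), where the integrand is interpreted as 0 at points where |n₃(r)| = 1 and n₃'(r) = 0 (which holds almost everywhere on {|n₃| = 1}) and +∞ where |n₃(r)| = 1 and n₃'(r) ≠ 0. Consequently I(0, ∞, cos θ, 1) = 2·s*·c*·(1 − cos θ). -/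
/- STATEMENT 14: Let s*, c* > 0 and θ ∈ [0,π]. For every locally-H¹ function
n₃ : [0,∞) → [−1,1] with n₃(0) = cos θ and n₃(r) → 1 as r → ∞,
∫₀^∞ [ s*²n₃'²/(1−n₃²) + c*²(1−n₃²) ] dr ≥ 2 s* c* (1 − cos θ) (integrand interpreted
as 0 where |n₃|=1 and n₃'=0, +∞ where |n₃|=1 and n₃'≠0).
Consequently I(0,∞,cosθ,1) = 2 s* c* (1 − cos θ).
H¹ functions are represented by their continuous representative together with the
weak derivative g, via the fundamental theorem of calculus. -/

noncomputable section

open MeasureTheory Set Filter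
open scoped ENNReal

/-- Admissible pairs (n₃, g): n₃ with values in [−1,1] on [0,∞), weak derivative g
locally square-integrable, n₃(0) = cos θ (via the FTC representation) and n₃ → 1 at ∞. -/
def Adm (θ : ℝ) (n₃ g : ℝ → ℝ) : Prop :=
  (∀ r : ℝ, 0 ≤ r → n₃ r ∈ Icc (-1 : ℝ) 1) ∧
  (∀ x : ℝ, 0 < x → IntegrableOn g (Ioc 0 x)) ∧
  (∀ x : ℝ, 0 < x → IntegrableOn (fun t => (g t) ^ 2) (Ioc 0 x)) ∧
  (∀ x : ℝ, 0 ≤ x → n₃ x = Real.cos θ + ∫ t in (0 : ℝ)..x, g t) ∧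
  Tendsto n₃ atTop (nhds 1)

/-- The energy of the pair (n₃, g) on (0,∞). -/
def energy1d (sS cS : ℝ) (n₃ g : ℝ → ℝ) : ℝ≥0∞ :=
  ∫⁻ r in Ioi (0 : ℝ), integrand sS cS (n₃ r) (g r)

/-!
Completing the square,
`s² d² / (1 - n²) + c² (1 - n²) = 2 s c d + (s d - c (1 - n²))² / (1 - n²)`,
so the energy is at least `2 s c ∫ n₃' = 2 s c (1 - cos θ)`, with equality when
`s n₃' = c (1 - n₃²)`.

For `n₃(0) = -1` this equation has only the constant solution, so it is perturbed. Write
`n₃ = cos φ` with `cot (φ / 2) = p / q` and `q = sin (θ / 2)` fixed; then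
`n₃ = (p² - q²) / (p² + q²)` and the equation becomes linear, `s p' = c p`. The perturbed solution
`p = cos (θ / 2) exp (c r / s) + ε sinh (c r / s)` keeps the initial value, tends to infinity for
every `θ ∈ [0, π]`, and costs at most `2 s c ε²` of extra energy.
-/

lemma ofReal_integral_le_lintegral_ofReal {α : Type*} [MeasurableSpace α] (μ : Measure α)
    (f : α → ℝ) :
    ENNReal.ofReal (∫ x, f x ∂μ) ≤ ∫⁻ x, ENNReal.ofReal (f x) ∂μ := by
  by_cases hf : Integrable f μ
  · refine ENNReal.ofReal_le_of_le_toReal ?_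
    rw [integral_eq_lintegral_pos_part_sub_lintegral_neg_part hf]
    exact sub_le_self _ ENNReal.toReal_nonneg
  · simp [integral_undef hf]

lemma lintegral_Ioi_ofReal_of_hasDerivAt_of_nonneg {F f : ℝ → ℝ} {a l : ℝ}
    (hderiv : ∀ x ∈ Ici a, HasDerivAt F (f x) x) (hnonneg : ∀ x ∈ Ioi a, 0 ≤ f x)
    (hlim : Tendsto F atTop (nhds l)) :
    ∫⁻ x in Ioi a, ENNReal.ofReal (f x) = ENNReal.ofReal (l - F a) := by
  rw [← integral_Ioi_of_hasDerivAt_of_nonneg' hderiv hnonneg hlim,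
    ofReal_integral_eq_lintegral_ofReal (integrableOn_Ioi_deriv_of_nonneg' hderiv hnonneg hlim)
      (ae_restrict_of_forall_mem measurableSet_Ioi hnonneg)]

lemma lintegral_Ioi_zero_ofReal_mul_exp_neg {a k : ℝ} (ha : 0 ≤ a) (hk : 0 < k) :
    ∫⁻ r in Ioi (0 : ℝ), ENNReal.ofReal (a * Real.exp (-k * r)) = ENNReal.ofReal (a / k) := by
  rw [← ofReal_integral_eq_lintegral_ofReal
      ((integrableOn_exp_mul_Ioi (neg_lt_zero.2 hk) 0).const_mul a)
      (Eventually.of_forall fun r => by positivity),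
    integral_const_mul, integral_exp_mul_Ioi (neg_lt_zero.2 hk)]
  simp [div_eq_mul_inv]

lemma integrand_of_sq_lt_one {s c n d : ℝ} (hn : n ^ 2 < 1) :
    integrand s c n d =
      ENNReal.ofReal (2 * s * c * d + (s * d - c * (1 - n ^ 2)) ^ 2 / (1 - n ^ 2)) := by
  have hpos : 0 < 1 - n ^ 2 := sub_pos.2 hn
  rw [integrand, if_neg fun h => hpos.ne' h.1]
  congr 1
  field_simp
  ring

lemma integrand_zero_of_sq_eq_one {s c n : ℝ} (hn : n ^ 2 = 1) : integrand s c n 0 = 0 := by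
  simp [integrand, hn]

lemma ofReal_le_integrand {s c n d : ℝ} (hn : n ∈ Icc (-1 : ℝ) 1) :
    ENNReal.ofReal (2 * s * c * d) ≤ integrand s c n d := by
  have hsq : n ^ 2 ≤ 1 := (sq_le_one_iff_abs_le_one n).2 (abs_le.2 hn)
  rcases hsq.eq_or_lt with hone | hlt
  · rcases eq_or_ne d 0 with rfl | hd
    · simp
    · simp [integrand, hone, hd]
  · rw [integrand_of_sq_lt_one hlt]
    exact ENNReal.ofReal_le_ofReal
      (le_add_of_nonneg_right (div_nonneg (sq_nonneg _) (sub_nonneg.2 hsq)))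

section LowerBound

variable {θ : ℝ} {n₃ g : ℝ → ℝ}

lemma Adm.ofReal_sub_le_energy1d (h : Adm θ n₃ g) (s c : ℝ) {x : ℝ} (hx : 0 ≤ x) :
    ENNReal.ofReal (2 * s * c * (n₃ x - Real.cos θ)) ≤ energy1d s c n₃ g := by
  obtain ⟨hmem, -, -, hftc, -⟩ := h
  calc ENNReal.ofReal (2 * s * c * (n₃ x - Real.cos θ))
      = ENNReal.ofReal (∫ t in Ioc 0 x, 2 * s * c * g t) := by
        rw [hftc x hx, add_sub_cancel_left, intervalIntegral.integral_of_le hx,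
          integral_const_mul]
    _ ≤ ∫⁻ t in Ioc 0 x, ENNReal.ofReal (2 * s * c * g t) :=
        ofReal_integral_le_lintegral_ofReal _ _
    _ ≤ ∫⁻ t in Ioc 0 x, integrand s c (n₃ t) (g t) :=
        setLIntegral_mono' measurableSet_Ioc fun t ht => ofReal_le_integrand (hmem t ht.1.le)
    _ ≤ energy1d s c n₃ g := lintegral_mono_set Ioc_subset_Ioi_self

lemma Adm.ofReal_le_energy1d (h : Adm θ n₃ g) (s c : ℝ) :
    ENNReal.ofReal (2 * s * c * (1 - Real.cos θ)) ≤ energy1d s c n₃ g := by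
  have hlim : Tendsto (fun x => ENNReal.ofReal (2 * s * c * (n₃ x - Real.cos θ))) atTop
      (nhds (ENNReal.ofReal (2 * s * c * (1 - Real.cos θ)))) :=
    ENNReal.tendsto_ofReal ((h.2.2.2.2.sub_const _).const_mul _)
  exact le_of_tendsto hlim
    ((eventually_ge_atTop 0).mono fun x hx => h.ofReal_sub_le_energy1d s c hx)

end LowerBound

lemma adm_of_hasDerivAt {θ : ℝ} {n₃ g : ℝ → ℝ} (hmem : ∀ r, 0 ≤ r → n₃ r ∈ Icc (-1 : ℝ) 1)
    (hderiv : ∀ r, 0 ≤ r → HasDerivAt n₃ (g r) r) (hg : ContinuousOn g (Ici 0))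
    (hzero : n₃ 0 = Real.cos θ) (hlim : Tendsto n₃ atTop (nhds 1)) : Adm θ n₃ g := by
  have hgIcc (x : ℝ) : ContinuousOn g (Icc 0 x) := hg.mono Icc_subset_Ici_self
  refine ⟨hmem, fun x _ => ?_, fun x _ => ?_, fun x hx => ?_, hlim⟩
  · exact (hgIcc x).integrableOn_Icc.mono_set Ioc_subset_Icc_self
  · exact ((hgIcc x).pow 2).integrableOn_Icc.mono_set Ioc_subset_Icc_self
  · have hderiv' : ∀ r ∈ uIcc 0 x, HasDerivAt n₃ (g r) r := fun r hr =>
      hderiv r (uIcc_of_le hx ▸ hr).1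
    rw [intervalIntegral.integral_eq_sub_of_hasDerivAt hderiv'
      ((hgIcc x).intervalIntegrable_of_Icc hx), hzero, add_sub_cancel]

section HalfAngle

/-- `cos φ` as a function of the half-angle coordinate `p`, where `cot (φ / 2) = p / q`. The
homogeneous form in `(p, q)` also covers `φ = 0`, as `q = 0`. -/
def halfAngleCos (q p : ℝ) : ℝ := (p ^ 2 - q ^ 2) / (p ^ 2 + q ^ 2)

/-- The derivative of `halfAngleCos q`. -/
def halfAngleCosDeriv (q p : ℝ) : ℝ := 4 * q ^ 2 * p / (p ^ 2 + q ^ 2) ^ 2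

variable {q p : ℝ}

lemma hasDerivAt_halfAngleCos (h : p ^ 2 + q ^ 2 ≠ 0) :
    HasDerivAt (halfAngleCos q) (halfAngleCosDeriv q p) p := by
  have hsq : HasDerivAt (fun x : ℝ => x ^ 2) (2 * p) p := by simpa using hasDerivAt_pow 2 p
  refine ((hsq.sub_const (q ^ 2)).div (hsq.add_const (q ^ 2)) h).congr_deriv ?_
  rw [halfAngleCosDeriv]
  ring

lemma continuousAt_halfAngleCosDeriv (h : p ^ 2 + q ^ 2 ≠ 0) :
    ContinuousAt (halfAngleCosDeriv q) p :=
  ContinuousAt.div (by fun_prop) (by fun_prop) (pow_ne_zero 2 h)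

lemma halfAngleCos_mem_Icc (q p : ℝ) : halfAngleCos q p ∈ Icc (-1 : ℝ) 1 := by
  have hden : 0 ≤ p ^ 2 + q ^ 2 := by positivity
  rw [mem_Icc, ← abs_le, halfAngleCos, abs_div, abs_of_nonneg hden]
  refine div_le_one_of_le₀ (abs_le.2 ⟨?_, ?_⟩) hden <;> linarith [sq_nonneg p, sq_nonneg q]

lemma one_sub_halfAngleCos_sq (h : p ^ 2 + q ^ 2 ≠ 0) :
    1 - halfAngleCos q p ^ 2 = 4 * q ^ 2 * p ^ 2 / (p ^ 2 + q ^ 2) ^ 2 := by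
  rw [halfAngleCos]
  field_simp
  ring

lemma halfAngleCos_sin_half_cos_half (θ : ℝ) :
    halfAngleCos (Real.sin (θ / 2)) (Real.cos (θ / 2)) = Real.cos θ := by
  rw [halfAngleCos, Real.cos_sq_add_sin_sq, div_one, ← Real.cos_two_mul',
    mul_div_cancel₀ θ two_ne_zero]

lemma tendsto_halfAngleCos_atTop (q : ℝ) : Tendsto (halfAngleCos q) atTop (nhds 1) := by
  have hden : Tendsto (fun p : ℝ => p ^ 2 + q ^ 2) atTop atTop :=
    tendsto_atTop_add_const_right _ _ (tendsto_pow_atTop two_ne_zero)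
  have hlim : Tendsto (fun p : ℝ => 1 - 2 * q ^ 2 / (p ^ 2 + q ^ 2)) atTop (nhds 1) := by
    simpa using (hden.const_div_atTop (2 * q ^ 2)).const_sub 1
  refine hlim.congr' ((eventually_gt_atTop 0).mono fun p hp => ?_)
  rw [halfAngleCos]
  field_simp
  ring

lemma integrand_halfAngleCos_le (s c v : ℝ) (h : 1 ≤ p ^ 2 + q ^ 2) :
    integrand s c (halfAngleCos q p) (halfAngleCosDeriv q p * v) ≤
      ENNReal.ofReal (2 * s * c * (halfAngleCosDeriv q p * v)) +
        ENNReal.ofReal (4 * (s * v - c * p) ^ 2) := by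
  have hden : 0 < p ^ 2 + q ^ 2 := one_pos.trans_le h
  have hsub := one_sub_halfAngleCos_sq hden.ne'
  by_cases hqp : q = 0 ∨ p = 0
  · have hone : halfAngleCos q p ^ 2 = 1 := by
      refine (sub_eq_zero.1 (hsub.trans ?_)).symm
      rcases hqp with rfl | rfl <;> simp
    have hzero : halfAngleCosDeriv q p * v = 0 := by
      rcases hqp with rfl | rfl <;> simp [halfAngleCosDeriv]
    rw [hzero, integrand_zero_of_sq_eq_one hone]
    exact zero_le
  obtain ⟨hq, hp⟩ := not_or.1 hqp
  have hlt : halfAngleCos q p ^ 2 < 1 := sub_pos.1 (hsub ▸ by positivity)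
  have hdefect : (s * (halfAngleCosDeriv q p * v) - c * (1 - halfAngleCos q p ^ 2)) ^ 2 /
      (1 - halfAngleCos q p ^ 2) =
        4 * (s * v - c * p) ^ 2 * (q ^ 2 / (p ^ 2 + q ^ 2) ^ 2) := by
    rw [hsub, halfAngleCosDeriv]
    field_simp
  have hweight : q ^ 2 / (p ^ 2 + q ^ 2) ^ 2 ≤ 1 :=
    div_le_one_of_le₀ (by nlinarith [sq_nonneg p]) (by positivity)
  rw [integrand_of_sq_lt_one hlt, hdefect]
  refine ENNReal.ofReal_add_le.trans (add_le_add_right (ENNReal.ofReal_le_ofReal ?_) _)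
  exact mul_le_of_le_one_right (by positivity) hweight

lemma energy1d_halfAngleCos_le {s c q : ℝ} {p p' : ℝ → ℝ} (hsc : 0 ≤ s * c)
    (hderiv : ∀ r ∈ Ici (0 : ℝ), HasDerivAt p (p' r) r)
    (hpq : ∀ r ∈ Ici (0 : ℝ), 1 ≤ p r ^ 2 + q ^ 2) (hp : ∀ r ∈ Ioi (0 : ℝ), 0 ≤ p r)
    (hp' : ∀ r ∈ Ioi (0 : ℝ), 0 ≤ p' r) (htop : Tendsto p atTop atTop) :
    energy1d s c (fun r => halfAngleCos q (p r)) (fun r => halfAngleCosDeriv q (p r) * p' r) ≤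
      ENNReal.ofReal (2 * s * c * (1 - halfAngleCos q (p 0))) +
        ∫⁻ r in Ioi (0 : ℝ), ENNReal.ofReal (4 * (s * p' r - c * p r) ^ 2) := by
  have hprimitive : ∀ r ∈ Ici (0 : ℝ), HasDerivAt (fun r => 2 * s * c * halfAngleCos q (p r))
      (2 * s * c * (halfAngleCosDeriv q (p r) * p' r)) r := fun r hr =>
    ((hasDerivAt_halfAngleCos (one_pos.trans_le (hpq r hr)).ne').comp r (hderiv r hr)).const_mul _
  have hnonneg : ∀ r ∈ Ioi (0 : ℝ), 0 ≤ 2 * s * c * (halfAngleCosDeriv q (p r) * p' r) := by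
    intro r hr
    have := hp r hr
    have := hp' r hr
    rw [halfAngleCosDeriv, mul_assoc 2 s c]
    positivity
  have hlim : Tendsto (fun r => 2 * s * c * halfAngleCos q (p r)) atTop (nhds (2 * s * c * 1)) :=
    ((tendsto_halfAngleCos_atTop q).comp htop).const_mul _
  rw [mul_sub, ← lintegral_Ioi_ofReal_of_hasDerivAt_of_nonneg hprimitive hnonneg hlim,
    ← lintegral_add_left' (integrableOn_Ioi_deriv_of_nonneg' hprimitive hnonneg
      hlim).aemeasurable.ennreal_ofReal]
  exact setLIntegral_mono' measurableSet_Ioi fun r hr =>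
    integrand_halfAngleCos_le s c (p' r) (hpq r (Ioi_subset_Ici_self hr))

end HalfAngle

section Competitor

/-- A perturbation of the solution `a * exp (k * r)` of `p' = k * p`, with the same value at `0`,
that is unbounded even when `a = 0`. -/
def perturbedExp (k a ε r : ℝ) : ℝ := a * Real.exp (k * r) + ε * Real.sinh (k * r)

/-- The derivative of `perturbedExp k a ε`. -/
def perturbedExpDeriv (k a ε r : ℝ) : ℝ := k * (a * Real.exp (k * r) + ε * Real.cosh (k * r))

lemma perturbedExp_zero (k a ε : ℝ) : perturbedExp k a ε 0 = a := by
  simp [perturbedExp]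

lemma hasDerivAt_perturbedExp (k a ε r : ℝ) :
    HasDerivAt (perturbedExp k a ε) (perturbedExpDeriv k a ε r) r := by
  have hlin : HasDerivAt (fun r : ℝ => k * r) k r := by simpa using (hasDerivAt_id r).const_mul k
  refine ((hlin.exp.const_mul a).add (hlin.sinh.const_mul ε)).congr_deriv ?_
  rw [perturbedExpDeriv]
  ring

lemma continuous_perturbedExpDeriv (k a ε : ℝ) : Continuous (perturbedExpDeriv k a ε) := by
  unfold perturbedExpDeriv
  fun_prop

lemma perturbedExpDeriv_sub (k a ε r : ℝ) :
    perturbedExpDeriv k a ε r - k * perturbedExp k a ε r = k * ε * Real.exp (-(k * r)) := by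
  rw [perturbedExpDeriv, perturbedExp, ← Real.cosh_sub_sinh]
  ring

variable {k a ε r : ℝ}

lemma perturbedExpDeriv_nonneg (hk : 0 ≤ k) (ha : 0 ≤ a) (hε : 0 ≤ ε) :
    0 ≤ perturbedExpDeriv k a ε r := by
  rw [perturbedExpDeriv]
  positivity

lemma le_perturbedExp (hk : 0 ≤ k) (ha : 0 ≤ a) (hε : 0 ≤ ε) (hr : 0 ≤ r) :
    a ≤ perturbedExp k a ε r := by
  have hmono : Monotone (perturbedExp k a ε) :=
    monotone_of_hasDerivAt_nonneg (hasDerivAt_perturbedExp k a ε)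
      fun _ => perturbedExpDeriv_nonneg hk ha hε
  simpa only [perturbedExp_zero] using hmono hr

lemma tendsto_perturbedExp_atTop (hk : 0 < k) (ha : 0 ≤ a) (hε : 0 < ε) :
    Tendsto (perturbedExp k a ε) atTop atTop := by
  have hlin : Tendsto (fun r => ε * (k * r)) atTop atTop :=
    (tendsto_id.const_mul_atTop hk).const_mul_atTop hε
  refine tendsto_atTop_mono' _ ((eventually_ge_atTop 0).mono fun r hr => ?_) hlin
  have hsinh : k * r ≤ Real.sinh (k * r) := Real.self_le_sinh_iff.2 (by positivity)
  rw [perturbedExp]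
  exact (mul_le_mul_of_nonneg_left hsinh hε.le).trans (le_add_of_nonneg_left (by positivity))

lemma one_le_perturbedExp_sq_add_sin_sq {θ : ℝ} (hk : 0 ≤ k) (hε : 0 ≤ ε)
    (hθ : 0 ≤ Real.cos (θ / 2)) (hr : 0 ≤ r) :
    1 ≤ perturbedExp k (Real.cos (θ / 2)) ε r ^ 2 + Real.sin (θ / 2) ^ 2 := by
  rw [← Real.cos_sq_add_sin_sq (θ / 2)]
  gcongr
  exact le_perturbedExp hk hθ hε hr

lemma lintegral_perturbedExp_defect {s c : ℝ} (hs : 0 < s) (hc : 0 < c) (a ε : ℝ) :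
    ∫⁻ r in Ioi (0 : ℝ), ENNReal.ofReal
        (4 * (s * perturbedExpDeriv (c / s) a ε r - c * perturbedExp (c / s) a ε r) ^ 2) =
      ENNReal.ofReal (2 * s * c * ε ^ 2) := by
  have hdefect (r : ℝ) :
      4 * (s * perturbedExpDeriv (c / s) a ε r - c * perturbedExp (c / s) a ε r) ^ 2 =
        4 * (c * ε) ^ 2 * Real.exp (-(2 * (c / s)) * r) := by
    have hfactor : s * perturbedExpDeriv (c / s) a ε r - c * perturbedExp (c / s) a ε r =
        c * ε * Real.exp (-(c / s * r)) := by
      linear_combination s * perturbedExpDeriv_sub (c / s) a ε r +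
        (perturbedExp (c / s) a ε r + ε * Real.exp (-(c / s * r))) * mul_div_cancel₀ c hs.ne'
    rw [hfactor, mul_pow, ← Real.exp_nat_mul, ← mul_assoc]
    congr 2
    push_cast
    ring
  simp_rw [hdefect]
  rw [lintegral_Ioi_zero_ofReal_mul_exp_neg (by positivity) (by positivity)]
  congr 1
  field_simp
  ring

lemma exists_adm_energy1d_le {s c θ ε : ℝ} (hs : 0 < s) (hc : 0 < c) (hε : 0 < ε)
    (hθ : 0 ≤ Real.cos (θ / 2)) :
    ∃ n₃ g : ℝ → ℝ, Adm θ n₃ g ∧ energy1d s c n₃ g ≤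
      ENNReal.ofReal (2 * s * c * (1 - Real.cos θ)) + ENNReal.ofReal (2 * s * c * ε ^ 2) := by
  have hk : 0 < c / s := div_pos hc hs
  set p := perturbedExp (c / s) (Real.cos (θ / 2)) ε
  set p' := perturbedExpDeriv (c / s) (Real.cos (θ / 2)) ε
  set q := Real.sin (θ / 2)
  have hderiv (r : ℝ) : HasDerivAt p (p' r) r := hasDerivAt_perturbedExp _ _ _ r
  have hpq (r : ℝ) (hr : 0 ≤ r) : 1 ≤ p r ^ 2 + q ^ 2 :=
    one_le_perturbedExp_sq_add_sin_sq hk.le hε.le hθ hr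
  have hne (r : ℝ) (hr : 0 ≤ r) : p r ^ 2 + q ^ 2 ≠ 0 := (one_pos.trans_le (hpq r hr)).ne'
  have htop : Tendsto p atTop atTop := tendsto_perturbedExp_atTop hk hθ hε
  have hzero : halfAngleCos q (p 0) = Real.cos θ := by
    rw [show p 0 = Real.cos (θ / 2) from perturbedExp_zero .., halfAngleCos_sin_half_cos_half]
  have hcont : ContinuousOn (fun r => halfAngleCosDeriv q (p r) * p' r) (Ici 0) := fun r hr =>
    (((continuousAt_halfAngleCosDeriv (hne r hr)).comp (hderiv r).continuousAt).mul
      (continuous_perturbedExpDeriv _ _ _).continuousAt).continuousWithinAt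
  refine ⟨fun r => halfAngleCos q (p r), fun r => halfAngleCosDeriv q (p r) * p' r, ?_, ?_⟩
  · exact adm_of_hasDerivAt (fun r _ => halfAngleCos_mem_Icc q (p r))
      (fun r hr => (hasDerivAt_halfAngleCos (hne r hr)).comp r (hderiv r)) hcont hzero
      ((tendsto_halfAngleCos_atTop q).comp htop)
  · rw [← hzero, ← lintegral_perturbedExp_defect hs hc (Real.cos (θ / 2)) ε]
    exact energy1d_halfAngleCos_le (mul_pos hs hc).le (fun r _ => hderiv r) hpq
      (fun r hr => hθ.trans (le_perturbedExp hk.le hθ hε.le hr.le))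
      (fun r _ => perturbedExpDeriv_nonneg hk.le hθ hε.le) htop

end Competitor

theorem statement14 (sS cS : ℝ) (hsS : 0 < sS) (hcS : 0 < cS)
    (θ : ℝ) (hθ : θ ∈ Icc 0 Real.pi) :
    (∀ n₃ g : ℝ → ℝ, Adm θ n₃ g →
      ENNReal.ofReal (2 * sS * cS * (1 - Real.cos θ)) ≤ energy1d sS cS n₃ g) ∧
    sInf {E : ℝ≥0∞ | ∃ n₃ g : ℝ → ℝ, Adm θ n₃ g ∧ E = energy1d sS cS n₃ g} =
      ENNReal.ofReal (2 * sS * cS * (1 - Real.cos θ)) := by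
  refine ⟨fun n₃ g h => h.ofReal_le_energy1d sS cS, le_antisymm ?_ (le_sInf ?_)⟩
  · have hcos : 0 ≤ Real.cos (θ / 2) :=
      Real.cos_nonneg_of_mem_Icc ⟨by linarith [hθ.1, Real.pi_pos], by linarith [hθ.2]⟩
    have hlim : Tendsto (fun ε : ℝ => ENNReal.ofReal (2 * sS * cS * (1 - Real.cos θ)) +
        ENNReal.ofReal (2 * sS * cS * ε ^ 2)) (nhdsWithin 0 (Ioi 0))
        (nhds (ENNReal.ofReal (2 * sS * cS * (1 - Real.cos θ)))) := by
      have hcont : Continuous fun ε : ℝ => ENNReal.ofReal (2 * sS * cS * (1 - Real.cos θ)) +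
          ENNReal.ofReal (2 * sS * cS * ε ^ 2) :=
        continuous_const.add (ENNReal.continuous_ofReal.comp (by fun_prop))
      exact (hcont.tendsto' 0 _ (by simp)).mono_left nhdsWithin_le_nhds
    refine ge_of_tendsto hlim (eventually_mem_nhdsWithin.mono fun ε hε => ?_)
    obtain ⟨n₃, g, hadm, henergy⟩ := exists_adm_energy1d_le hsS hcS hε hcos
    exact sInf_le_of_le ⟨n₃, g, hadm, rfl⟩ henergy
  · rintro _ ⟨n₃, g, hadm, rfl⟩
    exact hadm.ofReal_le_energy1d sS cS
end
end
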